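/- arXiv:1402.7184 — 10 statements merged into one kernel-verified Lean document; each statement's English description precedes it below -/
import Mathlib

section
/- There exists a regular function x₀ : [0,1] → ℝ such that, defining the sequence x_{t+1} = T x_t for all t ∈ ℕ (where T is the continuous-agent Hegselmann–Krause update), one has x_t(1) − x_t(0) > 2 for every t ∈ ℕ. -/
open MeasureTheory Set

/-- The neighbourhood set `N_x(α) = {β ∈ [0,1] : |x(β) − x(α)| ≤ 1}`. -/
def hkNbhd (x : ℝ → ℝ) (α : ℝ) : Set ℝ :=
  {β | β ∈ Icc (0:ℝ) 1 ∧ |x β - x α| ≤ 1}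

/-- The continuous-agent Hegselmann–Krause update
`Tx(α) = (∫_{N_x(α)} x dμ) / μ(N_x(α))`. -/
noncomputable def hkT (x : ℝ → ℝ) : ℝ → ℝ :=
  fun α => (∫ β in hkNbhd x α, x β) / (volume (hkNbhd x α)).toReal

/-- A function `x : [0,1] → ℝ` is regular if it is continuous, nondecreasing,
differentiable outside a set of measure zero, and there are constants
`0 < m ≤ M` with `m ≤ x′ ≤ M` wherever the derivative exists. -/
def Regular (x : ℝ → ℝ) : Prop :=
  ContinuousOn x (Icc 0 1) ∧ MonotoneOn x (Icc 0 1) ∧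
  ∃ m M : ℝ, 0 < m ∧ m ≤ M ∧
    (∀ᵐ α ∂(volume.restrict (Icc (0:ℝ) 1)), DifferentiableAt ℝ x α) ∧
    ∀ α ∈ Icc (0:ℝ) 1, DifferentiableAt ℝ x α → m ≤ deriv x α ∧ deriv x α ≤ M

namespace HK

/-- Weak lower bound for a set integral. -/
lemma int_lo {f : ℝ → ℝ} {s : Set ℝ} {k : ℝ} (hs : MeasurableSet s) (hfin : volume s ≠ ⊤)
    (hf : IntegrableOn f s) (h : ∀ γ ∈ s, k ≤ f γ) : k * volume.real s ≤ ∫ γ in s, f γ := by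
  have := setIntegral_mono_on (f := fun _ => k) (integrableOn_const hfin) hf hs h
  rw [setIntegral_const] at this
  simpa [mul_comm] using this

lemma int_hi {f : ℝ → ℝ} {s : Set ℝ} {k : ℝ} (hs : MeasurableSet s) (hfin : volume s ≠ ⊤)
    (hf : IntegrableOn f s) (h : ∀ γ ∈ s, f γ ≤ k) : ∫ γ in s, f γ ≤ k * volume.real s := by
  have := setIntegral_mono_on (g := fun _ => k) hf (integrableOn_const hfin) hs h
  rw [setIntegral_const] at this
  simpa [mul_comm] using this

lemma fin_of_sub {s : Set ℝ} (h : s ⊆ Icc (0:ℝ) 1) : volume s ≠ ⊤ :=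
  ne_top_of_le_ne_top (by simp) (measure_mono h)

lemma vol_le_one {s : Set ℝ} (h : s ⊆ Icc (0:ℝ) 1) : volume.real s ≤ 1 := by
  have := measureReal_mono (μ := volume) h (by simp)
  simpa using this

lemma vol_ge {s : Set ℝ} {a b : ℝ} (hab : a ≤ b) (hs : volume s ≠ ⊤) (h : Icc a b ⊆ s) :
    b - a ≤ volume.real s := by
  have := measureReal_mono (μ := volume) h hs
  simpa [hab] using this

lemma vol_ge_Ioc {s : Set ℝ} {a b : ℝ} (hab : a ≤ b) (hs : volume s ≠ ⊤) (h : Ioc a b ⊆ s) :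
    b - a ≤ volume.real s := by
  have := measureReal_mono (μ := volume) h hs
  simpa [hab] using this

lemma vol_le {s : Set ℝ} {a b : ℝ} (hab : a ≤ b) (h : s ⊆ Icc a b) :
    volume.real s ≤ b - a := by
  have := measureReal_mono (μ := volume) h (by simp)
  simpa [hab] using this

/-- Measure bounded by diameter. -/
lemma vol_le_diam {s : Set ℝ} {d : ℝ} (hd : 0 ≤ d)
    (h : ∀ α ∈ s, ∀ β ∈ s, α ≤ β → β - α ≤ d) : volume.real s ≤ d := by
  have h1 : volume s ≤ ENNReal.ofReal d := by
    refine (Real.volume_le_diam s).trans (Metric.ediam_le ?_)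
    intro a ha b hb
    rw [edist_dist]
    apply ENNReal.ofReal_le_ofReal
    rw [Real.dist_eq]
    rcases le_total a b with hab | hab
    · rw [abs_sub_comm, abs_of_nonneg (by linarith)]; exact h a ha b hb hab
    · rw [abs_of_nonneg (by linarith)]; exact h b hb a ha hab
  exact ENNReal.toReal_le_of_le_ofReal hd h1

lemma meas_pre {x : ℝ → ℝ} (hm : MonotoneOn x (Icc 0 1)) {J : Set ℝ} (hJ : J.OrdConnected) :
    MeasurableSet {γ | γ ∈ Icc (0:ℝ) 1 ∧ x γ ∈ J} := by
  apply Set.OrdConnected.measurableSet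
  constructor
  rintro a ⟨ha, ha'⟩ b ⟨hb, hb'⟩ z ⟨hz1, hz2⟩
  have hz : z ∈ Icc (0:ℝ) 1 := ⟨ha.1.trans hz1, hz2.trans hb.2⟩
  exact ⟨hz, hJ.out ha' hb' ⟨hm ha hz hz1, hm hz hb hz2⟩⟩

lemma meas_N {x : ℝ → ℝ} (hm : MonotoneOn x (Icc 0 1)) (α : ℝ) :
    MeasurableSet (hkNbhd x α) := by
  have := meas_pre hm (J := Icc (x α - 1) (x α + 1)) ordConnected_Icc
  convert this using 1
  ext γ
  simp only [hkNbhd, mem_ofPred_eq, mem_Icc, abs_le]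
  constructor
  · rintro ⟨h, h1, h2⟩; exact ⟨h, by linarith, by linarith⟩
  · rintro ⟨h, h1, h2⟩; exact ⟨h, by linarith, by linarith⟩

lemma N_sub (x : ℝ → ℝ) (α : ℝ) : hkNbhd x α ⊆ Icc (0:ℝ) 1 := fun _ h => h.1

lemma intg {x : ℝ → ℝ} (hm : MonotoneOn x (Icc 0 1)) {s : Set ℝ} (hs : s ⊆ Icc (0:ℝ) 1) :
    IntegrableOn x s :=
  (MonotoneOn.integrableOn_isCompact isCompact_Icc hm).mono_set hs

lemma hkT_eq (x : ℝ → ℝ) (α : ℝ) :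
    hkT x α = (∫ γ in hkNbhd x α, x γ) / volume.real (hkNbhd x α) := rfl

/-- average with a small bad part -/
lemma avg_lo {x : ℝ → ℝ} (hm : MonotoneOn x (Icc 0 1)) {s t : Set ℝ} (hs : s ⊆ Icc (0:ℝ) 1)
    (hsm : MeasurableSet s) (htm : MeasurableSet t) {k d p : ℝ} (hd : 0 ≤ d) (hp : 0 < p)
    (hps : p ≤ volume.real s)
    (h1 : k * volume.real (s ∩ t) ≤ ∫ γ in s ∩ t, x γ)
    (h2 : ∀ γ ∈ s \ t, k - d ≤ x γ) :
    k - d * volume.real (s \ t) / p ≤ (∫ γ in s, x γ) / volume.real s := by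
  have e1 := integral_inter_add_sdiff htm (intg hm hs)
  have e2 := measureReal_inter_add_sdiff (μ := volume) (s := s) htm (fin_of_sub hs)
  have hsub : s \ t ⊆ Icc (0:ℝ) 1 := sdiff_subset.trans hs
  have e3 := int_lo (hsm.diff htm) (fin_of_sub hsub) (intg hm hsub) h2
  have hpos : 0 < volume.real s := hp.trans_le hps
  have hn : 0 ≤ volume.real (s \ t) := measureReal_nonneg
  rw [le_div_iff₀ hpos]
  have : d * volume.real (s \ t) ≤ d * volume.real (s \ t) / p * volume.real s := by
    rw [div_mul_eq_mul_div, le_div_iff₀ hp]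
    exact mul_le_mul_of_nonneg_left hps (by positivity)
  have e4 : k * volume.real s = k * volume.real (s ∩ t) + k * volume.real (s \ t) := by
    rw [← e2]; ring
  rw [sub_mul] at e3 ⊢
  linarith

lemma mp_refl : MeasurePreserving (fun γ : ℝ => 1 - γ) volume volume :=
  Measure.measurePreserving_sub_left volume 1

lemma me_refl : MeasurableEmbedding (fun γ : ℝ => 1 - γ) :=
  (MeasurableEquiv.subLeft (1:ℝ)).measurableEmbedding

lemma int_refl {x : ℝ → ℝ} (ho : ∀ α, x (1 - α) = - x α) (s : Set ℝ) :
    ∫ γ in (fun γ : ℝ => 1 - γ) ⁻¹' s, x γ = - ∫ γ in s, x γ := by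
  have := mp_refl.setIntegral_preimage_emb me_refl x s
  simp only [ho] at this
  rw [integral_neg] at this
  linarith

lemma N_refl {x : ℝ → ℝ} (ho : ∀ α, x (1 - α) = - x α) (α : ℝ) :
    hkNbhd x (1 - α) = (fun γ : ℝ => 1 - γ) ⁻¹' hkNbhd x α := by
  ext γ
  simp only [hkNbhd, mem_ofPred_eq, mem_preimage, mem_Icc, ho]
  have : |x γ - -x α| = |-x γ - x α| := by
    rw [← abs_neg]; congr 1; ring
  rw [this]
  constructor
  · rintro ⟨⟨h1, h2⟩, h3⟩; exact ⟨⟨by linarith, by linarith⟩, h3⟩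
  · rintro ⟨⟨h1, h2⟩, h3⟩; exact ⟨⟨by linarith, by linarith⟩, h3⟩

lemma vol_N_refl {x : ℝ → ℝ} (ho : ∀ α, x (1 - α) = - x α) (hm : MonotoneOn x (Icc 0 1)) (α : ℝ) :
    volume.real (hkNbhd x (1 - α)) = volume.real (hkNbhd x α) := by
  rw [N_refl ho]
  exact mp_refl.measureReal_preimage (meas_N hm α).nullMeasurableSet

lemma T_odd {x : ℝ → ℝ} (ho : ∀ α, x (1 - α) = - x α) (hm : MonotoneOn x (Icc 0 1)) (α : ℝ) :
    hkT x (1 - α) = - hkT x α := by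
  rw [hkT_eq, hkT_eq, vol_N_refl ho hm, N_refl ho, int_refl ho, neg_div]

/-- Basic structural properties of the profiles. -/
structure Base (x : ℝ → ℝ) : Prop where
  odd : ∀ α, x (1 - α) = - x α
  mono : MonotoneOn x (Icc 0 1)
  up : x 1 ≤ 3/2
  lip : ∀ α β, 5011/10000 ≤ α → α ≤ β → β ≤ 1 → x β - x α ≤ 1/2000 * (β - α)
  cen : x (501/1000) ≤ 1/5
  low : 7/5 ≤ x (5011/10000)

variable {x : ℝ → ℝ}

lemma Base.half (h : Base x) : x (1/2) = 0 := by
  have := h.odd (1/2)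
  norm_num at this
  linarith

lemma Base.le_one (h : Base x) {γ : ℝ} (hγ : γ ∈ Icc (0:ℝ) 1) : x γ ≤ x 1 :=
  h.mono hγ ⟨by norm_num, le_rfl⟩ hγ.2

lemma Base.ge_neg (h : Base x) {γ : ℝ} (hγ : γ ∈ Icc (0:ℝ) 1) : - x 1 ≤ x γ := by
  have := h.le_one (γ := 1 - γ) ⟨by linarith [hγ.2], by linarith [hγ.1]⟩
  rw [h.odd] at this
  linarith

lemma Base.right (h : Base x) {γ : ℝ} (h1 : 5011/10000 ≤ γ) (h2 : γ ≤ 1) :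
    x (5011/10000) ≤ x γ :=
  h.mono ⟨by norm_num, by norm_num⟩ ⟨by linarith, h2⟩ h1

lemma Base.left (h : Base x) {γ : ℝ} (h1 : 0 ≤ γ) (h2 : γ ≤ 4989/10000) :
    x γ ≤ - x (5011/10000) := by
  have := h.right (γ := 1 - γ) (by linarith) (by linarith)
  rw [h.odd] at this
  linarith

lemma Base.width (h : Base x) : x 1 - x (5011/10000) ≤ 1/4000 := by
  have := h.lip (5011/10000) 1 le_rfl (by norm_num) le_rfl
  linarith

lemma Base.cen_hi (h : Base x) {γ : ℝ} (h1 : 0 ≤ γ) (h2 : γ ≤ 501/1000) : x γ ≤ 1/5 :=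
  (h.mono ⟨h1, by linarith⟩ ⟨by norm_num, by norm_num⟩ h2).trans h.cen

lemma Base.cen_lo (h : Base x) {γ : ℝ} (h1 : 499/1000 ≤ γ) (h2 : γ ≤ 1) : -(1/5) ≤ x γ := by
  have := h.cen_hi (γ := 1 - γ) (by linarith) (by linarith)
  rw [h.odd] at this
  linarith

lemma Base.nonneg (h : Base x) {γ : ℝ} (h1 : 1/2 ≤ γ) (h2 : γ ≤ 1) : 0 ≤ x γ := by
  rw [← h.half]
  exact h.mono ⟨by norm_num, by norm_num⟩ ⟨by linarith, h2⟩ h1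

lemma Base.C_int (h : Base x) : ∫ γ in Icc (499/1000 : ℝ) (501/1000), x γ = 0 := by
  have := int_refl h.odd (Icc (499/1000 : ℝ) (501/1000))
  have e : (fun γ : ℝ => 1 - γ) ⁻¹' Icc (499/1000 : ℝ) (501/1000)
      = Icc (499/1000 : ℝ) (501/1000) := by
    ext γ
    simp only [mem_preimage, mem_Icc]
    constructor <;> rintro ⟨h1, h2⟩ <;> constructor <;> linarith
  rw [e] at this
  linarith

lemma C_sub : Icc (499/1000 : ℝ) (501/1000) ⊆ Icc (0:ℝ) 1 :=
  Icc_subset_Icc (by norm_num) (by norm_num)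

lemma C_vol : volume.real (Icc (499/1000 : ℝ) (501/1000)) = 1/500 := by
  norm_num

/-- agents with moderate opinion see the center -/
lemma Base.C_sub_N (h : Base x) {α : ℝ} (h1 : 0 ≤ x α) (h2 : x α ≤ 4/5) :
    Icc (499/1000 : ℝ) (501/1000) ⊆ hkNbhd x α := by
  intro γ hγ
  have := h.cen_hi (γ := γ) (by linarith [hγ.1]) hγ.2
  have := h.cen_lo hγ.1 (by linarith [hγ.2])
  exact ⟨C_sub hγ, abs_le.2 ⟨by linarith, by linarith⟩⟩

lemma Base.R_sub_N (h : Base x) {α : ℝ} (hα : α ∈ Icc (0:ℝ) 1) (h2 : x 1 - 1 ≤ x α) :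
    Icc (5011/10000 : ℝ) 1 ⊆ hkNbhd x α := by
  intro γ hγ
  have hm : γ ∈ Icc (0:ℝ) 1 := ⟨by linarith [hγ.1], hγ.2⟩
  have := h.right hγ.1 hγ.2
  have := h.le_one hm
  have := h.le_one hα
  have := h.up
  have := h.low
  exact ⟨hm, abs_le.2 ⟨by linarith, by linarith⟩⟩

lemma Base.R_vol (h : Base x) {α : ℝ} (hα : α ∈ Icc (0:ℝ) 1) (h2 : x 1 - 1 ≤ x α) :
    1/4 ≤ volume.real (hkNbhd x α) := by
  have := vol_ge (by norm_num) (fin_of_sub (N_sub x α)) (h.R_sub_N hα h2)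
  linarith

lemma Base.posN (h : Base x) {α : ℝ} (hα : α ∈ Icc (0:ℝ) 1) : 0 < volume.real (hkNbhd x α) := by
  have key : ∀ α, 1/2 ≤ α → α ≤ 1 → 0 < volume.real (hkNbhd x α) := by
    intro α h1 h2
    have h0 := h.nonneg h1 h2
    rcases le_total (x α) (4/5) with h3 | h3
    · have := vol_ge (by norm_num) (fin_of_sub (N_sub x α)) (h.C_sub_N h0 h3)
      linarith
    · have := h.R_vol (α := α) ⟨by linarith, h2⟩ (by linarith [h.up])
      linarith
  rcases le_total (1/2) α with h1 | h1
  · exact key α h1 hα.2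
  · rw [← vol_N_refl h.odd h.mono]
    exact key _ (by linarith) (by linarith [hα.1])

lemma Base.T_le (h : Base x) {α k : ℝ} (hα : α ∈ Icc (0:ℝ) 1)
    (hk : ∀ γ ∈ hkNbhd x α, x γ ≤ k) : hkT x α ≤ k := by
  rw [hkT_eq, div_le_iff₀ (h.posN hα)]
  exact int_hi (meas_N h.mono α) (fin_of_sub (N_sub x α)) (intg h.mono (N_sub x α)) hk

lemma Base.le_T (h : Base x) {α k : ℝ} (hα : α ∈ Icc (0:ℝ) 1)
    (hk : ∀ γ ∈ hkNbhd x α, k ≤ x γ) : k ≤ hkT x α := by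
  rw [hkT_eq, le_div_iff₀ (h.posN hα)]
  exact int_lo (meas_N h.mono α) (fin_of_sub (N_sub x α)) (intg h.mono (N_sub x α)) hk

/-- Comparison of the averages with that over the common part. -/
lemma Base.T_le_avg (h : Base x) {α β : ℝ} (hα : α ∈ Icc (0:ℝ) 1) (hβ : β ∈ Icc (0:ℝ) 1)
    (hx : x α ≤ x β) {k : ℝ} (hpos : 0 < volume.real (hkNbhd x α ∩ hkNbhd x β))
    (hk : ∫ γ in hkNbhd x α ∩ hkNbhd x β, x γ = k * volume.real (hkNbhd x α ∩ hkNbhd x β)) :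
    hkT x α ≤ k := by
  have hA := meas_N h.mono α
  have hB := meas_N h.mono β
  have sI : hkNbhd x α ∩ hkNbhd x β ⊆ Icc 0 1 := inter_subset_left.trans (N_sub x α)
  have sD : hkNbhd x α \ hkNbhd x β ⊆ Icc 0 1 := sdiff_subset.trans (N_sub x α)
  have hk1 : x β - 1 ≤ k := by
    have := int_lo (k := x β - 1) (hA.inter hB) (fin_of_sub sI) (intg h.mono sI)
      (fun γ hγ => by have := (abs_le.1 hγ.2.2).1; linarith)
    rw [hk] at this
    exact le_of_mul_le_mul_right this hpos
  have e1 := integral_inter_add_sdiff hB (intg h.mono (N_sub x α))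
  have e2 := measureReal_inter_add_sdiff (μ := volume) (s := hkNbhd x α) hB (fin_of_sub (N_sub x α))
  have e3 := int_hi (k := k) (hA.diff hB) (fin_of_sub sD) (intg h.mono sD) (by
    rintro γ ⟨hγ1, hγ2⟩
    have h1 := abs_le.1 hγ1.2
    by_contra! hc
    exact hγ2 ⟨hγ1.1, abs_le.2 ⟨by linarith, by linarith⟩⟩)
  rw [hkT_eq, div_le_iff₀ (h.posN hα), ← e1, ← e2, hk]
  linarith

lemma Base.avg_le_T (h : Base x) {α β : ℝ} (hα : α ∈ Icc (0:ℝ) 1) (hβ : β ∈ Icc (0:ℝ) 1)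
    (hx : x α ≤ x β) {k b : ℝ}
    (hk : ∫ γ in hkNbhd x α ∩ hkNbhd x β, x γ = k * volume.real (hkNbhd x α ∩ hkNbhd x β))
    (hb : b ≤ x α + 1) (hkb : k ≤ b) :
    k + (b - k) * volume.real (hkNbhd x β \ hkNbhd x α) ≤ hkT x β := by
  have hA := meas_N h.mono α
  have hB := meas_N h.mono β
  rw [inter_comm] at hk
  have sD : hkNbhd x β \ hkNbhd x α ⊆ Icc 0 1 := sdiff_subset.trans (N_sub x β)
  have e1 := integral_inter_add_sdiff hA (intg h.mono (N_sub x β))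
  have e2 := measureReal_inter_add_sdiff (μ := volume) (s := hkNbhd x β) hA (fin_of_sub (N_sub x β))
  have e3 := int_lo (k := b) (hB.diff hA) (fin_of_sub sD) (intg h.mono sD) (by
    rintro γ ⟨hγ1, hγ2⟩
    have h1 := abs_le.1 hγ1.2
    by_contra! hc
    exact hγ2 ⟨hγ1.1, abs_le.2 ⟨by linarith, by linarith⟩⟩)
  have v1 := vol_le_one (N_sub x β)
  have v2 : 0 ≤ volume.real (hkNbhd x β \ hkNbhd x α) := measureReal_nonneg
  rw [hkT_eq, le_div_iff₀ (h.posN hβ), ← e1, hk]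
  have : (b - k) * volume.real (hkNbhd x β \ hkNbhd x α) * volume.real (hkNbhd x β)
      ≤ (b - k) * volume.real (hkNbhd x β \ hkNbhd x α) :=
    mul_le_of_le_one_right (mul_nonneg (by linarith) v2) v1
  rw [← e2] at this ⊢
  nlinarith

lemma Base.T_mono (h : Base x) : MonotoneOn (hkT x) (Icc 0 1) := by
  intro α hα β hβ hab
  have hx := h.mono hα hβ hab
  have hA := meas_N h.mono α
  have hB := meas_N h.mono β
  have sI : hkNbhd x α ∩ hkNbhd x β ⊆ Icc 0 1 := inter_subset_left.trans (N_sub x α)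
  rcases (measureReal_nonneg (μ := volume) (s := hkNbhd x α ∩ hkNbhd x β)).eq_or_lt with h0 | hpos
  · have h1 : x β - 1 ≤ hkT x β := h.le_T hβ (fun γ hγ => by have := abs_le.1 hγ.2; linarith)
    refine le_trans ?_ h1
    have e1 := integral_inter_add_sdiff hB (intg h.mono (N_sub x α))
    have e2 := measureReal_inter_add_sdiff (μ := volume) (s := hkNbhd x α) hB
      (fin_of_sub (N_sub x α))
    have sD : hkNbhd x α \ hkNbhd x β ⊆ Icc 0 1 := sdiff_subset.trans (N_sub x α)
    have e3 := int_hi (k := x β - 1) (hA.diff hB) (fin_of_sub sD) (intg h.mono sD) (by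
      rintro γ ⟨hγ1, hγ2⟩
      have h1 := abs_le.1 hγ1.2
      by_contra! hc
      exact hγ2 ⟨hγ1.1, abs_le.2 ⟨by linarith, by linarith⟩⟩)
    have h0' : volume (hkNbhd x α ∩ hkNbhd x β) = 0 := by
      rcases (ENNReal.toReal_eq_zero_iff _).1 h0.symm with h | h
      · exact h
      · exact absurd h (fin_of_sub sI)
    have e4 : ∫ γ in hkNbhd x α ∩ hkNbhd x β, x γ = 0 := setIntegral_measure_zero _ h0'
    rw [hkT_eq, div_le_iff₀ (h.posN hα), ← e1, ← e2, e4, ← h0]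
    linarith
  · obtain ⟨k, hk⟩ : ∃ k, ∫ γ in hkNbhd x α ∩ hkNbhd x β, x γ
        = k * volume.real (hkNbhd x α ∩ hkNbhd x β) :=
      ⟨_, (div_mul_cancel₀ _ hpos.ne').symm⟩
    have hk2 : k ≤ x α + 1 := by
      have := int_hi (k := x α + 1) (hA.inter hB) (fin_of_sub sI) (intg h.mono sI)
        (fun γ hγ => by have := (abs_le.1 hγ.1.2).2; linarith)
      rw [hk] at this
      exact le_of_mul_le_mul_right this hpos
    have h1 := h.T_le_avg hα hβ hx hpos hk
    have h2 := h.avg_le_T hα hβ hx hk le_rfl hk2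
    have := mul_nonneg (sub_nonneg.2 hk2)
      (measureReal_nonneg (μ := volume) (s := hkNbhd x β \ hkNbhd x α))
    linarith

/-- Agents not seeing the right cluster collapse to the center. -/
lemma Base.T_center (h : Base x) {α : ℝ} (hα : α ∈ Icc (0:ℝ) 1) (h0 : 0 ≤ x α)
    (h1 : x α < x (5011/10000) - 1) : hkT x α ≤ 3/20 := by
  have hup := h.up
  have hlow := h.low
  have hw := h.le_one (γ := 5011/10000) ⟨by norm_num, by norm_num⟩
  have hC := h.C_sub_N h0 (by linarith)
  have hN := N_sub x α
  have hNM := meas_N h.mono α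
  have hsub : hkNbhd x α ⊆ Icc (4989/10000) (5011/10000) := by
    intro γ hγ
    have a1 := abs_le.1 hγ.2
    constructor
    · by_contra! hc
      have := h.left hγ.1.1 hc.le
      linarith
    · by_contra! hc
      have := h.right hc.le hγ.1.2
      linarith
  have v1 := vol_le (by norm_num) hsub
  have e1 := integral_inter_add_sdiff (measurableSet_Icc (a := (499/1000:ℝ)) (b := 501/1000))
    (intg h.mono hN)
  have e2 := measureReal_inter_add_sdiff (μ := volume) (s := hkNbhd x α)
    (measurableSet_Icc (a := (499/1000:ℝ)) (b := 501/1000)) (fin_of_sub hN)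
  rw [inter_eq_right.2 hC, h.C_int] at e1
  rw [inter_eq_right.2 hC, C_vol] at e2
  have sD : hkNbhd x α \ Icc (499/1000 : ℝ) (501/1000) ⊆ Icc 0 1 := sdiff_subset.trans hN
  have e3 := int_hi (k := 3/2) (hNM.diff measurableSet_Icc) (fin_of_sub sD) (intg h.mono sD)
    (fun γ hγ => (h.le_one (sD hγ)).trans hup)
  rw [hkT_eq, div_le_iff₀ (h.posN hα)]
  linarith

/-- Agents seeing the whole right cluster are recruited. -/
lemma Base.T_recruit (h : Base x) {α : ℝ} (hα : α ∈ Icc (0:ℝ) 1) (h1 : x 1 - 1 < x α) :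
    6/5 < hkT x α := by
  have hup := h.up
  have hlow := h.low
  have hw := h.le_one (γ := 5011/10000) ⟨by norm_num, by norm_num⟩
  have hN := N_sub x α
  have hNM := meas_N h.mono α
  have hR := h.R_sub_N hα h1.le
  have hv := h.R_vol hα h1.le
  have sI : hkNbhd x α ∩ Icc (5011/10000 : ℝ) 1 ⊆ Icc 0 1 := inter_subset_left.trans hN
  have key := avg_lo h.mono hN hNM (measurableSet_Icc (a := (5011/10000:ℝ)) (b := 1))
    (k := 7/5) (d := 2) (p := 1/4) (by norm_num) (by norm_num) hv
    (int_lo (hNM.inter measurableSet_Icc) (fin_of_sub sI) (intg h.mono sI)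
      (fun γ hγ => hlow.trans (h.right hγ.2.1 hγ.2.2)))
    (fun γ hγ => by have := abs_le.1 hγ.1.2; linarith)
  have v : volume.real (hkNbhd x α \ Icc (5011/10000 : ℝ) 1) ≤ 22/10000 := by
    have := vol_le (s := hkNbhd x α \ Icc (5011/10000 : ℝ) 1) (a := 4989/10000) (b := 5011/10000)
      (by norm_num) (by
        rintro γ ⟨hγ, hγ'⟩
        have a1 := abs_le.1 hγ.2
        constructor
        · by_contra! hc
          have := h.left hγ.1.1 hc.le
          linarith
        · by_contra! hc
          exact hγ' ⟨hc.le, hγ.1.2⟩)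
    linarith
  rw [← hkT_eq] at key
  linarith

/-- The unstable window is stretched. -/
lemma Base.T_stretch (h : Base x) {α β : ℝ} (hα : α ∈ Icc (0:ℝ) 1) (hβ : β ∈ Icc (0:ℝ) 1)
    (hab : α ≤ β) (h1 : x (5011/10000) - 1 ≤ x α) (h2 : x β ≤ x 1 - 1) :
    2 * (x β - x α) ≤ hkT x β - hkT x α := by
  have hup := h.up
  have hlow := h.low
  have hw := h.le_one (γ := 5011/10000) ⟨by norm_num, by norm_num⟩
  have hwd := h.width
  have hx := h.mono hα hβ hab
  have hA := meas_N h.mono α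
  have hB := meas_N h.mono β
  have sI : hkNbhd x α ∩ hkNbhd x β ⊆ Icc 0 1 := inter_subset_left.trans (N_sub x α)
  have hC : Icc (499/1000 : ℝ) (501/1000) ⊆ hkNbhd x α ∩ hkNbhd x β :=
    subset_inter (h.C_sub_N (by linarith) (by linarith)) (h.C_sub_N (by linarith) (by linarith))
  have hv := vol_ge (by norm_num) (fin_of_sub sI) hC
  have hpos : 0 < volume.real (hkNbhd x α ∩ hkNbhd x β) := by linarith
  obtain ⟨k, hk⟩ : ∃ k, ∫ γ in hkNbhd x α ∩ hkNbhd x β, x γ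
        = k * volume.real (hkNbhd x α ∩ hkNbhd x β) :=
      ⟨_, (div_mul_cancel₀ _ hpos.ne').symm⟩
  have hkb : k ≤ x (5011/10000) - 1/1000 := by
    have e1 := integral_inter_add_sdiff (measurableSet_Icc (a := (499/1000:ℝ)) (b := 501/1000))
      (intg h.mono sI)
    have e2 := measureReal_inter_add_sdiff (μ := volume) (s := hkNbhd x α ∩ hkNbhd x β)
      (measurableSet_Icc (a := (499/1000:ℝ)) (b := 501/1000)) (fin_of_sub sI)
    rw [inter_eq_right.2 hC, h.C_int] at e1
    rw [inter_eq_right.2 hC, C_vol] at e2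
    have sD : (hkNbhd x α ∩ hkNbhd x β) \ Icc (499/1000 : ℝ) (501/1000) ⊆ Icc 0 1 :=
      sdiff_subset.trans sI
    have e3 := int_hi (k := x 1) ((hA.inter hB).diff measurableSet_Icc) (fin_of_sub sD)
      (intg h.mono sD) (fun γ hγ => h.le_one (sD hγ))
    have v1 := vol_le_one sI
    rw [hk] at e1
    have : k * volume.real (hkNbhd x α ∩ hkNbhd x β)
        ≤ (x (5011/10000) - 1/1000) * volume.real (hkNbhd x α ∩ hkNbhd x β) := by
      nlinarith
    exact le_of_mul_le_mul_right this hpos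
  have g1 := h.T_le_avg hα hβ hx hpos hk
  have g2 := h.avg_le_T hα hβ hx hk (b := x (5011/10000)) (by linarith) (by linarith)
  have g3 : 2000 * (x β - x α) ≤ volume.real (hkNbhd x β \ hkNbhd x α) := by
    rcases hx.eq_or_lt with heq | hlt
    · rw [heq]; simp
    have hcont : ContinuousOn x (Icc (5011/10000) 1) := by
      have : LipschitzOnWith (1/2000) x (Icc (5011/10000) 1) := by
        apply LipschitzOnWith.of_le_add_mul
        intro p hp q hq
        rw [Real.dist_eq]
        push_cast
        rcases le_total p q with hpq | hpq
        · have := h.mono ⟨by linarith [hp.1], hp.2⟩ ⟨by linarith [hq.1], hq.2⟩ hpq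
          have : 0 ≤ |p - q| := abs_nonneg _
          linarith
        · have := h.lip q p hq.1 hpq hp.2
          rw [abs_of_nonneg (by linarith)]
          linarith
      exact this.continuousOn
    obtain ⟨γ₂, hγ₂, hγ₂x⟩ := intermediate_value_Icc (by norm_num) hcont
      (show x β + 1 ∈ Icc (x (5011/10000)) (x 1) from ⟨by linarith, by linarith⟩)
    obtain ⟨γ₀, hγ₀, hγ₀x⟩ := intermediate_value_Icc (by norm_num) hcont
      (show x α + 1 ∈ Icc (x (5011/10000)) (x 1) from ⟨by linarith, by linarith⟩)
    have hcpt : IsCompact (Icc (5011/10000 : ℝ) 1 ∩ x ⁻¹' Iic (x α + 1)) :=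
      isCompact_Icc.of_isClosed_subset (hcont.preimage_isClosed_of_isClosed isClosed_Icc isClosed_Iic)
        inter_subset_left
    obtain ⟨γ₁, hγ₁, hmax⟩ := hcpt.exists_isGreatest ⟨γ₀, hγ₀, hγ₀x.le⟩
    have hγ₁x : x γ₁ ≤ x α + 1 := hγ₁.2
    have h12 : γ₁ ≤ γ₂ := by
      by_contra! hc
      have := h.mono ⟨by linarith [hγ₂.1], hγ₂.2⟩ ⟨by linarith [hγ₁.1.1], hγ₁.1.2⟩ hc.le
      linarith
    have l1 := h.lip γ₁ γ₂ hγ₁.1.1 h12 hγ₂.2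
    have sD : hkNbhd x β \ hkNbhd x α ⊆ Icc 0 1 := sdiff_subset.trans (N_sub x β)
    have := vol_ge_Ioc h12 (fin_of_sub sD) (by
      intro γ hγ
      have hγR : γ ∈ Icc (5011/10000 : ℝ) 1 := ⟨hγ₁.1.1.trans hγ.1.le, hγ.2.trans hγ₂.2⟩
      have hγI : γ ∈ Icc (0 : ℝ) 1 := ⟨by linarith [hγR.1], hγR.2⟩
      have b1 : x α + 1 < x γ := by
        by_contra! hc
        have := hmax ⟨hγR, hc⟩
        linarith [hγ.1]
      have b2 : x γ ≤ x β + 1 := by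
        rw [← hγ₂x]
        exact h.mono hγI ⟨by linarith [hγ₂.1], hγ₂.2⟩ hγ.2
      refine ⟨⟨hγI, abs_le.2 ⟨by linarith, by linarith⟩⟩, fun hc => ?_⟩
      have := abs_le.1 hc.2
      linarith)
    linarith
  have v2 : 0 ≤ volume.real (hkNbhd x β \ hkNbhd x α) := measureReal_nonneg
  nlinarith

/-- The full invariant, with a scale parameter `u = 2⁻ᵗ`. -/
structure Inv (x : ℝ → ℝ) (u : ℝ) : Prop extends Base x where
  low' : 7/5 + 16/5000 * u ≤ x (5011/10000)
  gap : volume.real {γ | γ ∈ Icc (0:ℝ) 1 ∧ x γ ∈ Ico (1/5) (7/5 + 16/5000 * u)} ≤ 1/5000 * u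
  ex : ∀ α ∈ Icc (0:ℝ) 1, ∀ β ∈ Icc (0:ℝ) 1, α ≤ β → 1/5 ≤ x α → x β ≤ 6/5 →
    10000 * (β - α) ≤ u * (x β - x α)

lemma Inv.T_core {u : ℝ} (h : Inv x u) {α : ℝ} (hα : α ∈ Icc (0:ℝ) 1)
    (h1 : 6/5 ≤ x α) : 7/5 + 16/5000 * (u/2) ≤ hkT x α := by
  have hup := h.up
  have hlow := h.low'
  have hw := h.le_one (γ := 5011/10000) ⟨by norm_num, by norm_num⟩
  have hN := N_sub x α
  have hNM := meas_N h.mono α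
  have hv := h.R_vol hα (by linarith)
  have htm := meas_pre h.mono (J := Ici (7/5 + 16/5000 * u)) ordConnected_Ici
  set t := {γ | γ ∈ Icc (0:ℝ) 1 ∧ x γ ∈ Ici (7/5 + 16/5000 * u)} with ht
  have sI : hkNbhd x α ∩ t ⊆ Icc 0 1 := inter_subset_left.trans hN
  have key := avg_lo h.mono hN hNM htm
    (k := 7/5 + 16/5000 * u) (d := 2) (p := 1/4) (by norm_num) (by norm_num) hv
    (int_lo (hNM.inter htm) (fin_of_sub sI) (intg h.mono sI)
      (fun γ hγ => hγ.2.2))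
    (fun γ hγ => by have := abs_le.1 hγ.1.2; linarith)
  have v : volume.real (hkNbhd x α \ t) ≤ 1/5000 * u := by
    refine le_trans (measureReal_mono ?_ (fin_of_sub fun _ hγ => hγ.1)) h.gap
    rintro γ ⟨hγ, hγ'⟩
    have a1 := abs_le.1 hγ.2
    refine ⟨hγ.1, by linarith, ?_⟩
    by_contra! hc
    exact hγ' ⟨hγ.1, hc⟩
  rw [← hkT_eq] at key
  linarith

lemma Inv.T_lip {u : ℝ} (h : Inv x u) (hu : u ≤ 1) (α β : ℝ) (hα : 5011/10000 ≤ α)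
    (hab : α ≤ β) (hβ : β ≤ 1) : hkT x β - hkT x α ≤ 1/2000 * (β - α) := by
  have hup := h.up
  have hlow := h.low
  have hwd := h.width
  have hαI : α ∈ Icc (0:ℝ) 1 := ⟨by linarith, by linarith⟩
  have hβI : β ∈ Icc (0:ℝ) 1 := ⟨by linarith, by linarith⟩
  have hx := h.mono hαI hβI hab
  have r1 := h.right hα (hab.trans hβ)
  have r2 := h.le_one hβI
  have hl := h.lip α β hα hab hβ
  have hA := meas_N h.mono α
  have hB := meas_N h.mono β
  have hBA : hkNbhd x β ⊆ hkNbhd x α := by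
    intro γ hγ
    have a1 := abs_le.1 hγ.2
    have := h.le_one hγ.1
    exact ⟨hγ.1, abs_le.2 ⟨by linarith, by linarith⟩⟩
  have hT : hkT x β ≤ x 1 := h.T_le hβI (fun γ hγ => h.le_one hγ.1)
  have key := avg_lo h.mono (N_sub x α) hA hB
    (k := hkT x β) (d := 2) (p := 1/4) (by norm_num) (by norm_num)
    (h.R_vol hαI (by linarith))
    (by
      rw [inter_eq_right.2 hBA, hkT_eq, div_mul_cancel₀ _ (h.posN hβI).ne'])
    (fun γ hγ => by have := abs_le.1 hγ.1.2; linarith)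
  have v : volume.real (hkNbhd x α \ hkNbhd x β) ≤ (x β - x α) / 10000 := by
    apply vol_le_diam (by linarith)
    have aux : ∀ γ ∈ hkNbhd x α \ hkNbhd x β, x α - 1 ≤ x γ ∧ x γ < x β - 1 := by
      rintro γ ⟨hγ, hγ'⟩
      have a1 := abs_le.1 hγ.2
      refine ⟨by linarith, ?_⟩
      by_contra! hc
      exact hγ' ⟨hγ.1, abs_le.2 ⟨by linarith, by linarith⟩⟩
    intro p hp q hq hpq
    have a1 := aux p hp
    have a2 := aux q hq
    have m1 := h.mono hp.1.1 hq.1.1 hpq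
    have := h.ex p hp.1.1 q hq.1.1 hpq (by linarith) (by linarith)
    have : u * (x q - x p) ≤ 1 * (x q - x p) := mul_le_mul_of_nonneg_right hu (by linarith)
    linarith
  rw [← hkT_eq] at key
  linarith

lemma Inv.T_window {u : ℝ} (h : Inv x u) {α : ℝ} (hα : α ∈ Icc (0:ℝ) 1)
    (h1 : 1/5 ≤ hkT x α) : x (5011/10000) - 1 ≤ x α := by
  have hb := h.toBase
  by_contra! hc
  rcases le_total 0 (x α) with h0 | h0
  · have := hb.T_center hα h0 hc
    linarith
  · rcases le_total (1/2) α with h2 | h2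
    · have := hb.T_center hα (hb.nonneg h2 hα.2) hc
      linarith
    · have m := hb.T_mono hα (show (1/2 : ℝ) ∈ Icc (0:ℝ) 1 by norm_num) h2
      have := hb.T_center (α := 1/2) (by norm_num) hb.half.ge (by linarith [hb.half, hb.low])
      linarith

lemma Inv.step {u : ℝ} (h : Inv x u) (hu0 : 0 < u) (hu : u ≤ 1) : Inv (hkT x) (u/2) := by
  have hb := h.toBase
  have hlow := h.low'
  have hup := h.up
  have hw := h.le_one (γ := 5011/10000) ⟨by norm_num, by norm_num⟩
  have hr : 7/5 + 16/5000 * (u/2) ≤ hkT x (5011/10000) :=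
    h.T_core ⟨by norm_num, by norm_num⟩ (by linarith)
  refine ⟨⟨T_odd h.odd h.mono, hb.T_mono, ?_, h.T_lip hu, ?_, by linarith⟩, hr, ?_, ?_⟩
  · exact hb.T_le (by norm_num) (fun γ hγ => (h.le_one hγ.1).trans h.up)
  · have := hb.T_center (α := 501/1000) (by norm_num) (hb.nonneg (by norm_num) (by norm_num))
      (by linarith [h.cen])
    linarith
  · apply vol_le_diam (by linarith)
    have aux : ∀ γ ∈ {γ | γ ∈ Icc (0:ℝ) 1 ∧ hkT x γ ∈ Ico (1/5) (7/5 + 16/5000 * (u/2))},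
        γ ∈ Icc (0:ℝ) 1 ∧ 1/5 ≤ x γ ∧ x γ ≤ 6/5 := by
      rintro γ ⟨hγ, h1, h2⟩
      have := h.T_window hγ h1
      refine ⟨hγ, by linarith, ?_⟩
      by_contra! hc
      have := h.T_core hγ hc.le
      linarith
    intro p hp q hq hpq
    obtain ⟨p0, p1, p2⟩ := aux p hp
    obtain ⟨q0, q1, q2⟩ := aux q hq
    have := h.ex p p0 q q0 hpq p1 q2
    nlinarith
  · intro α hα β hβ hab h1 h2
    have w1 := h.T_window hα h1
    have w2 : x β ≤ x 1 - 1 := by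
      by_contra! hc
      have := hb.T_recruit hβ hc
      linarith
    have s := hb.T_stretch hα hβ hab w1 w2
    have := h.ex α hα β hβ hab (by linarith) (by linarith)
    nlinarith

/-- The initial profile. -/
noncomputable def x0 (α : ℝ) : ℝ :=
  (α - 1/2) / 2000 + 14500 * (max (1/1000) (min (α - 1/2) (11/10000))
    + max (-(11/10000)) (min (α - 1/2) (-(1/1000))))

lemma x0_slope {α β : ℝ} (h : α ≤ β) :
    (β - α) / 2000 ≤ x0 β - x0 α ∧ x0 β - x0 α ≤ 30000 * (β - α) := by
  unfold x0
  have h1 : max (1/1000) (min (α - 1/2) (11/10000)) ≤ max (1/1000) (min (β - 1/2) (11/10000)) := by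
    gcongr
  have h2 : max (-(11/10000)) (min (α - 1/2) (-(1/1000)))
      ≤ max (-(11/10000)) (min (β - 1/2) (-(1/1000))) := by
    gcongr
  have h3 : max (1/1000) (min (β - 1/2) (11/10000))
      ≤ max (1/1000) (min (α - 1/2) (11/10000)) + (β - α) := by
    grind
  have h4 : max (-(11/10000)) (min (β - 1/2) (-(1/1000)))
      ≤ max (-(11/10000)) (min (α - 1/2) (-(1/1000))) + (β - α) := by
    grind
  constructor <;> linarith

lemma x0_mono : Monotone x0 := fun α β h => by
  have := (x0_slope h).1
  linarith

lemma x0_cont : Continuous x0 := by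
  unfold x0; fun_prop

lemma x0_right {α : ℝ} (h : 5011/10000 ≤ α) : x0 α = (α - 1/2) / 2000 + 29/20 := by
  unfold x0
  rw [min_eq_right (by linarith), max_eq_right (by norm_num), min_eq_right (by linarith),
    max_eq_right (by norm_num)]
  ring

lemma x0_link {α : ℝ} (h : 501/1000 ≤ α) (h' : α ≤ 5011/10000) :
    x0 α = (α - 1/2) / 2000 + 14500 * (α - 501/1000) := by
  unfold x0
  rw [min_eq_left (by linarith), max_eq_right (by linarith), min_eq_right (by linarith),
    max_eq_right (by norm_num)]
  ring

lemma x0_inv : Inv x0 1 := by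
  have hlo : ∀ γ, 1/5 ≤ x0 γ → 501/1000 ≤ γ := by
    intro γ h
    by_contra! hc
    have := x0_mono hc.le
    rw [x0_link le_rfl (by norm_num)] at this
    linarith
  have hhi : ∀ γ, x0 γ < 29/20 → γ ≤ 5011/10000 := by
    intro γ h
    by_contra! hc
    rw [x0_right hc.le] at h
    linarith
  refine ⟨⟨?_, x0_mono.monotoneOn _, ?_, ?_, ?_, ?_⟩, ?_, ?_, ?_⟩
  · intro α
    unfold x0
    have h1 : max (1/1000) (min (1 - α - 1/2) (11/10000))
        = - max (-(11/10000)) (min (α - 1/2) (-(1/1000))) := by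
      grind
    have h2 : max (-(11/10000)) (min (1 - α - 1/2) (-(1/1000)))
        = - max (1/1000) (min (α - 1/2) (11/10000)) := by
      grind
    rw [h1, h2]; ring
  · rw [x0_right (by norm_num)]; norm_num
  · intro α β h1 h2 h3
    rw [x0_right h1, x0_right (h1.trans h2)]
    linarith
  · rw [x0_link (by norm_num) (by norm_num)]; norm_num
  · rw [x0_right (by norm_num)]; norm_num
  · rw [x0_right (by norm_num)]; norm_num
  · have := vol_le (s := {γ | γ ∈ Icc (0:ℝ) 1 ∧ x0 γ ∈ Ico (1/5) (7/5 + 16/5000 * 1)})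
      (a := 501/1000) (b := 5011/10000) (by norm_num) (by
        rintro γ ⟨_, h1, h2⟩
        exact ⟨hlo γ h1, hhi γ (by linarith)⟩)
    linarith
  · intro α _ β _ hab h1 h2
    have a1 := hlo α h1
    have a2 := hhi β (by linarith)
    rw [x0_link a1 (by linarith), x0_link (by linarith) a2]
    linarith

lemma x0_regular : Regular x0 := by
  refine ⟨x0_cont.continuousOn, x0_mono.monotoneOn _, 1/2000, 30000, by norm_num, by norm_num,
    ae_restrict_of_ae x0_mono.ae_differentiableAt, ?_⟩
  intro α _ hd
  constructor
  · have hm : Monotone (fun α => x0 α - 1/2000 * α) := fun a b h => by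
      have := (x0_slope h).1
      dsimp only
      linarith
    have h0 : 0 ≤ deriv (fun α => x0 α - 1/2000 * α) α := hm.deriv_nonneg
    have h1 : HasDerivAt (fun α => x0 α - 1/2000 * α) (deriv x0 α - 1/2000 * 1) α :=
      hd.hasDerivAt.sub ((hasDerivAt_id α).const_mul _)
    rw [h1.deriv] at h0
    linarith
  · have hm : Monotone (fun α => 30000 * α - x0 α) := fun a b h => by
      have := (x0_slope h).2
      dsimp only
      linarith
    have h0 : 0 ≤ deriv (fun α => 30000 * α - x0 α) α := hm.deriv_nonneg
    have h1 : HasDerivAt (fun α => 30000 * α - x0 α) (30000 * 1 - deriv x0 α) α :=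
      ((hasDerivAt_id α).const_mul _).sub hd.hasDerivAt
    rw [h1.deriv] at h0
    linarith

lemma iter_inv (t : ℕ) : Inv (hkT^[t] x0) ((1/2)^t) := by
  induction t with
  | zero => simpa using x0_inv
  | succ n ih =>
    rw [Function.iterate_succ_apply']
    have := ih.step (by positivity) (pow_le_one₀ (by norm_num) (by norm_num))
    rw [pow_succ]
    convert this using 1
    ring

end HK


/-- There is a regular initial opinion function whose HK iterates always
retain opinions separated by more than two. -/
theorem exists_regular_never_consensus :
    ∃ x₀ : ℝ → ℝ, Regular x₀ ∧
      ∀ t : ℕ, (hkT^[t] x₀) 1 - (hkT^[t] x₀) 0 > 2 := by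
  refine ⟨HK.x0, HK.x0_regular, fun t => ?_⟩
  have h := (HK.iter_inv t).toBase
  have h1 := h.odd 1
  have h2 := h.low
  have h3 := h.right (γ := 1) (by norm_num) le_rfl
  rw [sub_self] at h1
  linarith
end

section
/- Under the construction setup with assumptions (I)–(VI): every agent belonging to B_y had, at the previous step, an opinion in x(A) + 1, i.e. B_y ⊆ {α ∈ [0,1] : x(α) ∈ x(A) + 1}; moreover y(A) ⊆ [0, ε]. Consequently A_y ⊇ A_x and B_y ⊆ B_x. -/
open MeasureTheory Set

lemma hk_aux_int {f : ℝ → ℝ} {N S : Set ℝ} {p q K : ℝ} (hN : MeasurableSet N)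
    (hS : MeasurableSet S) (hSN : S ⊆ N) (hf : IntegrableOn f N) (hK : 0 ≤ K) (hpq : p ≤ q)
    (h : ∀ β ∈ N \ S, β ∈ Icc p q ∧ f β ≤ K) :
    ∫ β in N, f β ≤ (∫ β in S, f β) + K * (q - p) := by
  have h1 : ∫ β in N, f β = (∫ β in S, f β) + ∫ β in N \ S, f β := by
    rw [setIntegral_sdiff hS hf hSN]; ring
  rw [h1]
  have hsub : N \ S ⊆ Icc p q := fun β hβ => (h β hβ).1
  have hlt : volume (N \ S) < ⊤ := lt_of_le_of_lt (measure_mono hsub) (by simp)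
  have h2 : ∫ β in N \ S, f β ≤ ∫ β in N \ S, K := by
    apply setIntegral_mono_on (hf.mono_set sdiff_subset) _ (hN.diff hS)
    · exact fun β hβ => (h β hβ).2
    · exact integrableOn_const hlt.ne
  have h3 : volume.real (N \ S) ≤ q - p := by
    have : volume.real (N \ S) ≤ volume.real (Icc p q) := measureReal_mono hsub (by simp)
    rwa [Real.volume_real_Icc_of_le hpq] at this
  rw [setIntegral_const, smul_eq_mul] at h2
  nlinarith

lemma hk_aux_const {x : ℝ → ℝ} {N : Set ℝ} {c : ℝ} (hN : N ⊆ Icc 0 1)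
    (hf : IntegrableOn x N) :
    ∫ β in N, (x β - c) = (∫ β in N, x β) - c * volume.real N := by
  have hlt : volume N < ⊤ := lt_of_le_of_lt (measure_mono hN) (by simp)
  rw [integral_sub hf (integrableOn_const hlt.ne), setIntegral_const, smul_eq_mul]
  ring

set_option maxHeartbeats 2000000 in
/-- Lemma 1 of the paper: only agents with previous opinion in `x(A) + 1` can
end up in `B_{t+1}`; moreover `y(A) ⊆ [0, ε]`, hence `A_{t+1} ⊇ A_t` and `B_{t+1} ⊆ B_t`. -/
theorem hk_next_B
    -- the confidence/width parameter ε and the fixed constant d = 3/2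
    (ε d : ℝ) (hε : 0 < ε) (hε' : ε ≤ 1/10) (hd : d = 3/2)
    -- partition of [0,1] into consecutive closed intervals A, B, C, D, E
    (a₁ a₂ a₃ a₄ : ℝ)
    (h₀₁ : 0 ≤ a₁) (h₁₂ : a₁ ≤ a₂) (h₂₃ : a₂ ≤ a₃) (h₃₄ : a₃ ≤ a₄) (h₄₅ : a₄ ≤ 1)
    (A B C D E : Set ℝ)
    (hA : A = Icc 0 a₁) (hB : B = Icc a₁ a₂) (hC : C = Icc a₂ a₃)
    (hD : D = Icc a₃ a₄) (hE : E = Icc a₄ 1)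
    -- |B| = |D| = ε²|C|, |C| = ε²|A| = ε²|E| (symmetric about 1/2)
    (hlenB : a₂ - a₁ = ε^2 * (a₃ - a₂))
    (hlenD : a₄ - a₃ = ε^2 * (a₃ - a₂))
    (hlenC : a₃ - a₂ = ε^2 * a₁)
    (hlenE : 1 - a₄ = a₁)
    -- the opinion function x : regular, nonnegative, anti-symmetric about 1/2
    (x : ℝ → ℝ) (hreg : Regular x)
    (hnonneg : ∀ α ∈ Icc (0:ℝ) 1, 0 ≤ x α)
    (hsym : ∀ s ∈ Icc (0:ℝ) (1/2), x (1/2 + s) + x (1/2 - s) = 2 * x (1/2))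
    (hmid : x (1/2) = d + 3*ε/2)
    -- the sets A_x = x⁻¹([0,2ε]), B_x = x⁻¹([2ε, d+ε]) and the mean Ā on A_x
    (Ax Bx : Set ℝ) (Abar : ℝ)
    (hAx : Ax = {α ∈ Icc (0:ℝ) 1 | x α ∈ Icc 0 (2*ε)})
    (hBx : Bx = {α ∈ Icc (0:ℝ) 1 | x α ∈ Icc (2*ε) (d + ε)})
    (hAbar : Abar = (∫ α in Ax, x α) / (volume Ax).toReal)
    -- derivative bounds e, s > 0
    (e s : ℝ) (he : 0 < e) (hs : 0 < s)
    -- Assumptions (I)–(VI)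
    (hI : A ⊆ Ax)
    (hII : Bx ⊆ B)
    (hIII : x '' A ⊆ Icc 0 ε)
    (hIV : ∀ α ∈ A, DifferentiableAt ℝ x α → deriv x α ≤ e)
    (hV : ∀ α ∈ Bx, DifferentiableAt ℝ x α → s ≤ deriv x α)
    (hVI : ε - Abar > 2*ε^2)
    -- the updated opinion function y = Tx
    (y : ℝ → ℝ) (hy : y = hkT x)
    (Ay By : Set ℝ)
    (hAy : Ay = {α ∈ Icc (0:ℝ) 1 | y α ∈ Icc 0 (2*ε)})
    (hBy : By = {α ∈ Icc (0:ℝ) 1 | y α ∈ Icc (2*ε) (d + ε)}) :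
    (∀ α ∈ By, ∃ β ∈ A, x α = x β + 1) ∧
    y '' A ⊆ Icc 0 ε ∧
    Ax ⊆ Ay ∧ By ⊆ Bx := by
  obtain ⟨hcont, hmono, -⟩ := hreg
  subst hd hA hB hC hD hE hy hAy hBy
  have ha1 : 0 < a₁ := by
    rcases h₀₁.lt_or_eq with h | h
    · exact h
    · subst h
      rw [mul_zero] at hlenC
      rw [hlenC, mul_zero] at hlenB hlenD
      linarith
  have he2 : 0 < ε^2 := by positivity
  have hsum : a₂ + a₃ = 1 := by linarith
  have mem : ∀ {t : ℝ}, 0 ≤ t → t ≤ 1 → t ∈ Icc (0:ℝ) 1 := fun h h' => ⟨h, h'⟩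
  have m1 : a₁ ∈ Icc (0:ℝ) 1 := mem (by linarith) (by linarith)
  have m2 : a₂ ∈ Icc (0:ℝ) 1 := mem (by linarith) (by linarith)
  have m3 : a₃ ∈ Icc (0:ℝ) 1 := mem (by linarith) (by linarith)
  have m4 : a₄ ∈ Icc (0:ℝ) 1 := mem (by linarith) (by linarith)
  have mc : (1/2:ℝ) ∈ Icc (0:ℝ) 1 := mem (by norm_num) (by norm_num)
  have m0 : (0:ℝ) ∈ Icc (0:ℝ) 1 := mem le_rfl (by norm_num)
  have mo : (1:ℝ) ∈ Icc (0:ℝ) 1 := mem (by norm_num) le_rfl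
  have hsym' : ∀ t ∈ Icc (0:ℝ) 1, x t + x (1 - t) = 3 + 3 * ε := by
    intro t ht
    rcases le_total t (1/2) with h | h
    · have := hsym (1/2 - t) ⟨by linarith, by linarith [ht.1]⟩
      rw [show (1/2:ℝ) + (1/2 - t) = 1 - t by ring, show (1/2:ℝ) - (1/2 - t) = t by ring] at this
      linarith
    · have := hsym (t - 1/2) ⟨by linarith, by linarith [ht.2]⟩
      rw [show (1/2:ℝ) + (t - 1/2) = t by ring, show (1/2:ℝ) - (t - 1/2) = 1 - t by ring] at this
      linarith
  have xa1 : x a₁ ≤ ε := (hIII ⟨a₁, ⟨h₀₁, le_rfl⟩, rfl⟩).2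
  have x0 : x 0 ≤ ε := (hIII ⟨0, ⟨le_rfl, h₀₁⟩, rfl⟩).2
  have x00 : 0 ≤ x 0 := hnonneg 0 m0
  have xa4 : 3 + 2 * ε ≤ x a₄ := by
    have := hsym' a₄ m4
    rw [hlenE] at this
    linarith
  have x1 : x 1 ≤ 3 + 3 * ε := by
    have := hsym' 1 mo
    rw [sub_self] at this
    linarith
  have xle : ∀ t ∈ Icc (0:ℝ) 1, x t ≤ 3 + 3 * ε := fun t ht => (hmono ht mo ht.2).trans x1
  have xa2 : 3/2 + ε ≤ x a₂ := by
    by_contra hcon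
    push Not at hcon
    have hc' : ContinuousOn x (Icc a₂ (1/2)) :=
      hcont.mono (Icc_subset_Icc (by linarith) (by norm_num))
    have hle : a₂ ≤ 1/2 := by linarith
    obtain ⟨t, ht, htx⟩ := intermediate_value_Icc hle hc'
      (show max (x a₂) (2*ε) / 2 + (3/2 + ε)/2 ∈ Icc (x a₂) (x (1/2)) by
        rw [hmid]
        constructor
        · have := le_max_left (x a₂) (2*ε)
          linarith
        · have : max (x a₂) (2*ε) ≤ 3/2 + ε := max_le hcon.le (by linarith)
          linarith)
    have hmx : max (x a₂) (2*ε) < 3/2 + ε := max_lt hcon (by linarith)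
    have h3 := le_max_left (x a₂) (2*ε)
    have h4 := le_max_right (x a₂) (2*ε)
    have htB : t ∈ Bx := by
      rw [hBx]
      exact ⟨mem (by linarith [ht.1]) (by linarith [ht.2]), by linarith, by linarith⟩
    have h5 : t = a₂ := le_antisymm (hII htB).2 ht.1
    rw [h5] at htx
    linarith
  have xa3 : x a₃ ≤ 3/2 + 2 * ε := by
    have := hsym' a₂ m2
    rw [show 1 - a₂ = a₃ by linarith] at this
    linarith
  have hint : IntegrableOn x (Icc 0 1) := hcont.integrableOn_compact isCompact_Icc
  have hNsub : ∀ α, hkNbhd x α ⊆ Icc 0 1 := fun α β hβ => hβ.1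
  have hNmeas : ∀ α, MeasurableSet (hkNbhd x α) := by
    intro α
    have : hkNbhd x α = Icc 0 1 ∩ x ⁻¹' (Icc (x α - 1) (x α + 1)) := by
      ext β
      simp only [hkNbhd, mem_ofPred_eq, mem_inter_iff, mem_preimage, mem_Icc, abs_le]
      constructor
      · rintro ⟨h, h1, h2⟩
        exact ⟨h, by linarith, by linarith⟩
      · rintro ⟨h, h1, h2⟩
        exact ⟨h, by linarith, by linarith⟩
    rw [this]
    exact (hcont.preimage_isClosed_of_isClosed isClosed_Icc isClosed_Icc).measurableSet
  have hAmeas : MeasurableSet Ax := by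
    rw [hAx]
    exact (hcont.preimage_isClosed_of_isClosed isClosed_Icc isClosed_Icc).measurableSet
  have hAsub : Ax ⊆ Icc 0 1 := by
    rw [hAx]
    exact fun β hβ => hβ.1
  have hNi : ∀ (c : ℝ) {N : Set ℝ}, N ⊆ Icc 0 1 → IntegrableOn (fun β => x β - c) N := by
    intro c N hN
    exact (hint.sub (integrableOn_const (by simp))).mono_set hN
  have hpos : ∀ {p q : ℝ} {N : Set ℝ}, p ≤ q → Icc p q ⊆ N → N ⊆ Icc 0 1 →
      q - p ≤ volume.real N := by
    intro p q N hpq h h'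
    have hlt : volume N < ⊤ := lt_of_le_of_lt (measure_mono h') (by simp)
    have : volume.real (Icc p q) ≤ volume.real N := measureReal_mono h hlt.ne
    rwa [Real.volume_real_Icc_of_le hpq] at this
  have hAxv : a₁ ≤ volume.real Ax := by
    have := hpos h₀₁ hI hAsub
    linarith
  have hAxi : ∫ α in Ax, x α = Abar * volume.real Ax := by
    rw [hAbar]
    have : (volume Ax).toReal = volume.real Ax := rfl
    rw [this, div_mul_cancel₀]
    linarith
  have key : ∀ α c K q, Ax ⊆ hkNbhd x α → 0 ≤ K → a₁ ≤ q → Abar ≤ c →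
      (∀ β ∈ hkNbhd x α \ Ax, β ∈ Icc a₁ q ∧ x β - c ≤ K) →
      (Abar - c) * a₁ + K * (q - a₁) < 0 → hkT x α < c := by
    intro α c K q hsub hK hq hc h hneg
    have h1 := hk_aux_int (hNmeas α) hAmeas hsub (hNi c (hNsub α)) hK hq h
    rw [hk_aux_const (hNsub α) (hint.mono_set (hNsub α)),
      hk_aux_const hAsub (hint.mono_set hAsub), hAxi] at h1
    have h2 := hpos h₀₁ (hI.trans hsub) (hNsub α)
    show (∫ β in hkNbhd x α, x β) / volume.real (hkNbhd x α) < c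
    rw [div_lt_iff₀ (by linarith)]
    have h3 : (Abar - c) * volume.real Ax ≤ (Abar - c) * a₁ :=
      mul_le_mul_of_nonpos_left hAxv (by linarith)
    linarith
  have hyA : ∀ α ∈ Ax, hkT x α < ε := by
    intro α hα
    rw [hAx] at hα
    obtain ⟨hα1, hα2, hα3⟩ := hα
    apply key α ε 2 a₂ _ (by norm_num) h₁₂ (by linarith)
    · intro β hβ
      obtain ⟨⟨hβ1, hβ2⟩, hβ3⟩ := hβ
      rw [abs_le] at hβ2
      have h1 : 2 * ε < x β := by
        by_contra hcon
        push Not at hcon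
        exact hβ3 (by rw [hAx]; exact ⟨hβ1, hnonneg β hβ1, hcon⟩)
      exact ⟨hII (by rw [hBx]; exact ⟨hβ1, h1.le, by linarith⟩), by linarith⟩
    · rw [hlenB, hlenC]
      have h1 : ε^2 ≤ 1/100 := by nlinarith only [hε, hε']
      have h2 : (Abar - ε + 2 * ε^2) * a₁ < 0 := mul_neg_of_neg_of_pos (by linarith) ha1
      have h3 : ε^2 * (ε^2 * a₁) ≤ 1/100 * (ε^2 * a₁) :=
        mul_le_mul_of_nonneg_right h1 (by positivity)
      linarith [mul_pos he2 ha1]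
    · intro β hβ
      rw [hAx] at hβ
      obtain ⟨hβ1, hβ2, hβ3⟩ := hβ
      exact ⟨hβ1, abs_le.2 ⟨by linarith, by linarith⟩⟩
  have hy0 : ∀ α, 0 ≤ hkT x α := by
    intro α
    exact div_nonneg (setIntegral_nonneg (hNmeas α) (fun β hβ => hnonneg β hβ.1))
      ENNReal.toReal_nonneg
  have low : ∀ α ∈ Icc (0:ℝ) 1, x α < x 0 + 1 → hkT x α < 2 * ε := by
    intro α hα hxα
    apply key α (2*ε) (21/10) a₄ _ (by norm_num) (by linarith) (by linarith)
    · intro β hβ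
      obtain ⟨⟨hβ1, hβ2⟩, hβ3⟩ := hβ
      rw [abs_le] at hβ2
      refine ⟨⟨?_, ?_⟩, by linarith⟩
      · by_contra hcon
        push Not at hcon
        exact hβ3 (hI ⟨hβ1.1, hcon.le⟩)
      · by_contra hcon
        push Not at hcon
        have := hmono m4 hβ1 hcon.le
        linarith
    · have h1 : ε^2 ≤ 1/100 := by nlinarith only [hε, hε']
      have h2 : (Abar - ε + 2 * ε^2) * a₁ < 0 := mul_neg_of_neg_of_pos (by linarith) ha1
      have h3 : ε^2 * (ε^2 * a₁) ≤ 1/100 * (ε^2 * a₁) :=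
        mul_le_mul_of_nonneg_right h1 (by positivity)
      have h4 : a₄ - a₁ = ε^2 * a₁ + 2 * (ε^2 * (ε^2 * a₁)) := by
        rw [hlenC] at hlenB hlenD
        linarith
      rw [h4]
      have h5 : ε^2 * a₁ ≤ 1/10 * (ε * a₁) := by
        rw [show ε^2 * a₁ = ε * (ε * a₁) by ring]
        exact mul_le_mul_of_nonneg_right hε' (by positivity)
      linarith [mul_pos he2 ha1, mul_pos hε ha1]
    · intro β hβ
      rw [hAx] at hβ
      obtain ⟨hβ1, hβ2, hβ3⟩ := hβ
      have := hmono m0 hβ1 hβ1.1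
      exact ⟨hβ1, abs_le.2 ⟨by linarith, by linarith [hnonneg α hα]⟩⟩
  have hLpos : 0 < a₃ - a₂ := by
    rw [hlenC]; positivity
  have hCint : ∫ β in Icc a₂ a₃, x β = (3/2 + 3*ε/2) * (a₃ - a₂) := by
    rw [integral_Icc_eq_integral_Ioc, ← intervalIntegral.integral_of_le h₂₃]
    have hi : IntervalIntegrable x volume a₂ a₃ := by
      apply ContinuousOn.intervalIntegrable_of_Icc h₂₃
      exact hcont.mono (Icc_subset_Icc m2.1 m3.2)
    have e1 : ∫ t in a₂..a₃, x (1 - t) = ∫ t in a₂..a₃, x t := by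
      rw [intervalIntegral.integral_comp_sub_left (fun t => x t) 1]
      rw [show 1 - a₃ = a₂ by linarith, show 1 - a₂ = a₃ by linarith]
    have e2 : ∫ t in a₂..a₃, x (1 - t) = ∫ t in a₂..a₃, ((3 + 3*ε) - x t) := by
      apply intervalIntegral.integral_congr
      intro t ht
      rw [uIcc_of_le h₂₃] at ht
      have := hsym' t (mem (by linarith [ht.1, m2.1]) (by linarith [ht.2, m3.2]))
      simp only
      linarith
    rw [intervalIntegral.integral_sub (by simp) hi, intervalIntegral.integral_const,
      smul_eq_mul] at e2
    linarith
  have key2 : ∀ α c, 0 < volume.real (hkNbhd x α) →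
      ∫ β in hkNbhd x α, -(x β - c) < 0 → c < hkT x α := by
    intro α c hp h
    rw [integral_neg, hk_aux_const (hNsub α) (hint.mono_set (hNsub α))] at h
    show c < (∫ β in hkNbhd x α, x β) / volume.real (hkNbhd x α)
    rw [lt_div_iff₀ hp]
    linarith
  have high : ∀ α ∈ Icc (0:ℝ) 1, x a₁ + 1 < x α → 3/2 + ε < hkT x α := by
    intro α hα hxα
    have hxa1 := hnonneg a₁ m1
    have hni := (hNi (3/2 + ε) (hNsub α)).neg
    have xle' := xle α hα
    rcases le_or_gt (x α) (5/2 + ε) with hcase | hcase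
    · have hCN : Icc a₂ a₃ ⊆ hkNbhd x α := by
        intro β hβ
        have hβ1 : β ∈ Icc (0:ℝ) 1 := mem (by linarith [hβ.1, m2.1]) (by linarith [hβ.2, m3.2])
        have h1 := hmono m2 hβ1 hβ.1
        have h2 := hmono hβ1 m3 hβ.2
        exact ⟨hβ1, abs_le.2 ⟨by linarith, by linarith⟩⟩
      apply key2
      · have := hpos h₂₃ hCN (hNsub α)
        linarith
      have hSm : MeasurableSet (hkNbhd x α ∩ Icc a₂ 1) := (hNmeas α).inter measurableSet_Icc
      have s1 := hk_aux_int (K := 8/5) (p := a₁) (q := a₂) (hNmeas α) hSm inter_subset_left hni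
        (by norm_num) h₁₂ (by
          rintro β ⟨hβ, hβ'⟩
          have hlt : β < a₂ := by
            by_contra hcon
            push Not at hcon
            exact hβ' ⟨hβ, hcon, hβ.1.2⟩
          refine ⟨⟨?_, hlt.le⟩, ?_⟩
          · by_contra hcon
            push Not at hcon
            have h1 := hmono hβ.1 m1 hcon.le
            have h2 := (abs_le.1 hβ.2).1
            linarith
          · have := hnonneg β hβ.1
            simp only [Pi.neg_apply]
            linarith)
      have s2 := hk_aux_int (S := Icc a₂ a₃) (K := 0) (p := 0) (q := 1) hSm measurableSet_Icc
        (fun β hβ => ⟨hCN hβ, hβ.1, (hCN hβ).1.2⟩) (hni.mono_set inter_subset_left)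
        le_rfl (by norm_num) (by
          rintro β ⟨⟨hβ, hβ2⟩, -⟩
          refine ⟨hβ.1, ?_⟩
          have := hmono m2 hβ.1 hβ2.1
          simp only [Pi.neg_apply]
          linarith)
      have hCsub : Icc a₂ a₃ ⊆ Icc 0 1 := hCN.trans (hNsub α)
      simp only [Pi.neg_apply] at s1 s2
      have s3 : ∫ β in Icc a₂ a₃, -(x β - (3/2 + ε)) = -(ε/2 * (a₃ - a₂)) := by
        rw [integral_neg, hk_aux_const hCsub (hint.mono_set hCsub), hCint,
          Real.volume_real_Icc_of_le h₂₃]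
        ring
      have h5 : ε^2 * (a₃ - a₂) ≤ 1/10 * (ε * (a₃ - a₂)) := by
        rw [show ε^2 * (a₃ - a₂) = ε * (ε * (a₃ - a₂)) by ring]
        exact mul_le_mul_of_nonneg_right hε' (by positivity)
      rw [hlenB] at s1
      linarith [mul_pos hε hLpos]
    · have hEN : Icc a₄ 1 ⊆ hkNbhd x α := by
        intro β hβ
        have hβ1 : β ∈ Icc (0:ℝ) 1 := mem (by linarith [hβ.1, m4.1]) hβ.2
        have h1 := hmono m4 hβ1 hβ.1
        have h2 := xle β hβ1
        exact ⟨hβ1, abs_le.2 ⟨by linarith, by linarith⟩⟩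
      apply key2
      · have := hpos h₄₅ hEN (hNsub α)
        linarith
      have hEsub : Icc a₄ 1 ⊆ Icc 0 1 := hEN.trans (hNsub α)
      have s1 := hk_aux_int (S := Icc a₄ 1) (K := 0) (p := 0) (q := 1) (hNmeas α)
        measurableSet_Icc hEN hni le_rfl (by norm_num) (by
          rintro β ⟨hβ, -⟩
          refine ⟨hβ.1, ?_⟩
          have := (abs_le.1 hβ.2).1
          simp only [Pi.neg_apply]
          linarith)
      have s2 := hk_aux_int (S := ∅) (f := fun β => -(x β - (3 + 2 * ε))) (K := 0) (p := 0)
        (q := 1) (measurableSet_Icc (a := a₄) (b := 1)) MeasurableSet.empty (empty_subset _)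
        (hNi (3 + 2 * ε) hEsub).neg le_rfl (by norm_num) (by
          rintro β ⟨hβ, -⟩
          refine ⟨hEsub hβ, ?_⟩
          have := hmono m4 (hEsub hβ) hβ.1
          linarith)
      simp only [Pi.neg_apply] at s1
      rw [integral_neg (fun β => x β - (3/2 + ε)) (μ := volume.restrict (Icc a₄ 1)),
        hk_aux_const hEsub (hint.mono_set hEsub), Real.volume_real_Icc_of_le h₄₅] at s1
      rw [integral_neg, hk_aux_const hEsub (hint.mono_set hEsub),
        Real.volume_real_Icc_of_le h₄₅, Measure.restrict_empty, integral_zero_measure] at s2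
      rw [hlenE] at s1 s2
      linarith [mul_pos hε ha1]
  have first : ∀ α, α ∈ Icc (0:ℝ) 1 → hkT x α ∈ Icc (2*ε) (3/2 + ε) →
      ∃ β ∈ Icc 0 a₁, x α = x β + 1 := by
    intro α hα hyα
    have h1 : x 0 + 1 ≤ x α := by
      by_contra hcon
      push Not at hcon
      linarith [low α hα hcon, hyα.1]
    have h2 : x α ≤ x a₁ + 1 := by
      by_contra hcon
      push Not at hcon
      linarith [high α hα hcon, hyα.2]
    obtain ⟨β, hβ, hβx⟩ := intermediate_value_Icc h₀₁
      (hcont.mono (Icc_subset_Icc le_rfl m1.2))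
      (show x α - 1 ∈ Icc (x 0) (x a₁) from ⟨by linarith, by linarith⟩)
    exact ⟨β, hβ, by linarith⟩
  refine ⟨fun α hα => first α hα.1 hα.2, ?_, ?_, ?_⟩
  · rintro _ ⟨α, hα, rfl⟩
    exact ⟨hy0 α, (hyA α (hI hα)).le⟩
  · intro α hα
    exact ⟨hAsub hα, hy0 α, by linarith [hyA α hα]⟩
  · intro α hα
    obtain ⟨β, hβ, hx⟩ := first α hα.1 hα.2
    have hb := hIII ⟨β, hβ, rfl⟩
    rw [hBx]
    exact ⟨hα.1, by linarith [hb.1], by linarith [hb.2]⟩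
end

section
/- Under the construction setup with assumptions (I)–(VI): if γ ∈ [0,1] is an agent whose opinion satisfies x(γ) = x(max A) + 1 (i.e. x(γ) equals the maximum of x(A) plus one), then the updated opinion satisfies y(γ) ≥ ε + d. -/
open MeasureTheory Set

/-- The agent `γ` whose opinion is the maximum of `x(A)` plus one gets updated
opinion at least `ε + d` (so it leaves `ℬ` on the right). -/
theorem hk_gamma_escapes_right
    -- the confidence/width parameter ε and the fixed constant d = 3/2
    (ε d : ℝ) (hε : 0 < ε) (hε' : ε ≤ 1/10) (hd : d = 3/2)
    -- partition of [0,1] into consecutive closed intervals A, B, C, D, E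
    (a₁ a₂ a₃ a₄ : ℝ)
    (h₀₁ : 0 ≤ a₁) (h₁₂ : a₁ ≤ a₂) (h₂₃ : a₂ ≤ a₃) (h₃₄ : a₃ ≤ a₄) (h₄₅ : a₄ ≤ 1)
    (A B C D E : Set ℝ)
    (hA : A = Icc 0 a₁) (hB : B = Icc a₁ a₂) (hC : C = Icc a₂ a₃)
    (hD : D = Icc a₃ a₄) (hE : E = Icc a₄ 1)
    -- |B| = |D| = ε²|C|, |C| = ε²|A| = ε²|E| (symmetric about 1/2)
    (hlenB : a₂ - a₁ = ε^2 * (a₃ - a₂))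
    (hlenD : a₄ - a₃ = ε^2 * (a₃ - a₂))
    (hlenC : a₃ - a₂ = ε^2 * a₁)
    (hlenE : 1 - a₄ = a₁)
    -- the opinion function x : regular, nonnegative, anti-symmetric about 1/2
    (x : ℝ → ℝ) (hreg : Regular x)
    (hnonneg : ∀ α ∈ Icc (0:ℝ) 1, 0 ≤ x α)
    (hsym : ∀ s ∈ Icc (0:ℝ) (1/2), x (1/2 + s) + x (1/2 - s) = 2 * x (1/2))
    (hmid : x (1/2) = d + 3*ε/2)
    -- the sets A_x = x⁻¹([0,2ε]), B_x = x⁻¹([2ε, d+ε]) and the mean Ā on A_x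
    (Ax Bx : Set ℝ) (Abar : ℝ)
    (hAx : Ax = {α ∈ Icc (0:ℝ) 1 | x α ∈ Icc 0 (2*ε)})
    (hBx : Bx = {α ∈ Icc (0:ℝ) 1 | x α ∈ Icc (2*ε) (d + ε)})
    (hAbar : Abar = (∫ α in Ax, x α) / (volume Ax).toReal)
    -- derivative bounds e, s > 0
    (e s : ℝ) (he : 0 < e) (hs : 0 < s)
    -- Assumptions (I)–(VI)
    (hI : A ⊆ Ax)
    (hII : Bx ⊆ B)
    (hIII : x '' A ⊆ Icc 0 ε)
    (hIV : ∀ α ∈ A, DifferentiableAt ℝ x α → deriv x α ≤ e)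
    (hV : ∀ α ∈ Bx, DifferentiableAt ℝ x α → s ≤ deriv x α)
    (hVI : ε - Abar > 2*ε^2)
    -- the updated opinion function y = Tx
    (y : ℝ → ℝ) (hy : y = hkT x)
    (γ : ℝ) (hγ : γ ∈ Icc (0:ℝ) 1) (hγx : x γ = x a₁ + 1) :
    y γ ≥ ε + d := by
  obtain ⟨hcont, hmono, m, M, hm, hmM, -, hder⟩ := hreg
  have ha1 : 0 < a₁ := by
    rcases h₀₁.lt_or_eq with h | h
    · exact h
    · subst h
      simp at hlenC
      rw [hlenC] at hlenB hlenD
      linarith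
  have hC0 : 0 < a₃ - a₂ := by rw [hlenC]; positivity
  have hsum : a₂ + a₃ = 1 := by linarith
  have hhalf : a₂ < 1/2 := by linarith
  have hhalf' : 1/2 < a₃ := by linarith
  have ha1I : a₁ ∈ Icc (0:ℝ) 1 := ⟨h₀₁, by linarith⟩
  have hmidI : (1/2 : ℝ) ∈ Icc (0:ℝ) 1 := ⟨by norm_num, by norm_num⟩
  have hp : x a₁ ∈ Icc 0 ε := hIII ⟨a₁, by rw [hA]; exact ⟨h₀₁, le_rfl⟩, rfl⟩
  -- strictness to the left of `a₁`
  have hstrict : ∀ β ∈ Icc (0:ℝ) 1, β < a₁ → x β < x a₁ := by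
    intro β hβ hlt
    refine lt_of_le_of_ne (hmono hβ ha1I hlt.le) fun heq => ?_
    have hc : (β + a₁) / 2 ∈ Ioo β a₁ := ⟨by linarith, by linarith⟩
    have hev : x =ᶠ[nhds ((β + a₁) / 2)] fun _ => x a₁ := by
      filter_upwards [Ioo_mem_nhds hc.1 hc.2] with t ht
      have htI : t ∈ Icc (0:ℝ) 1 := ⟨hβ.1.trans ht.1.le, ht.2.le.trans ha1I.2⟩
      have h1 := hmono hβ htI ht.1.le
      have h2 := hmono htI ha1I ht.2.le
      linarith
    have hD' : HasDerivAt x 0 ((β + a₁) / 2) := (hasDerivAt_const _ _).congr_of_eventuallyEq hev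
    have h3 := (hder _ ⟨hβ.1.trans hc.1.le, hc.2.le.trans ha1I.2⟩ hD'.differentiableAt).1
    rw [hD'.deriv] at h3
    linarith
  -- lower bound to the right of `a₂`
  have hright : ∀ β ∈ Icc (0:ℝ) 1, a₂ < β → d + ε ≤ x β := by
    intro β hβ hlt
    by_contra! hcon
    have hβh : β ≤ 1/2 := by
      by_contra! h
      have := hmono hmidI hβ h.le
      linarith
    obtain ⟨c, hc, hxc⟩ := intermediate_value_Icc hβh
      (hcont.mono (Icc_subset_Icc hβ.1 hmidI.2))
      (show d + ε ∈ Icc (x β) (x (1/2)) from ⟨hcon.le, by linarith⟩)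
    have hcB : c ∈ Bx := by
      rw [hBx]
      exact ⟨⟨hβ.1.trans hc.1, hc.2.trans hmidI.2⟩, by rw [hxc]; constructor <;> linarith⟩
    have := hII hcB
    rw [hB] at this
    linarith [this.2, hc.1]
  set N := hkNbhd x γ with hN
  have hNsub : N ⊆ Icc 0 1 := fun β hβ => hβ.1
  have hNmeas : MeasurableSet N := by
    have : IsClosed (Icc (0:ℝ) 1 ∩ x ⁻¹' (Icc (x γ - 1) (x γ + 1))) :=
      hcont.preimage_isClosed_of_isClosed isClosed_Icc isClosed_Icc
    convert this.measurableSet using 1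
    ext β
    simp only [hN, hkNbhd, mem_setOf_eq, mem_inter_iff, mem_preimage, mem_Icc, abs_le]
    constructor
    · rintro ⟨h, h1, h2⟩; exact ⟨h, by linarith, by linarith⟩
    · rintro ⟨h, h1, h2⟩; exact ⟨h, by linarith, by linarith⟩
  have hNfin : volume N ≠ ⊤ :=
    ((measure_mono hNsub).trans_lt (by simp : volume (Icc (0:ℝ) 1) < ⊤)).ne
  have hNleft : ∀ β ∈ N, a₁ ≤ β := by
    intro β hβ
    by_contra! h
    have h1 := hstrict β hβ.1 h
    have h2 := (abs_le.1 hβ.2).1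
    linarith
  have hNright : Ioo (1/2) a₃ ⊆ N := by
    intro β hβ
    have hβI : β ∈ Icc (0:ℝ) 1 := ⟨by linarith [hβ.1], by linarith [hβ.2]⟩
    refine ⟨hβI, ?_⟩
    have h1 := hmono hmidI hβI hβ.1.le
    have h2 := hsym (β - 1/2) ⟨by linarith [hβ.1], by linarith [hβI.2]⟩
    have h3 := hright (1/2 - (β - 1/2)) ⟨by linarith [hβI.2], by linarith [hβ.1]⟩
      (by linarith [hβ.2])
    rw [show 1/2 + (β - 1/2) = β by ring] at h2
    rw [abs_le]
    constructor <;> linarith [hp.1, hp.2]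
  have hNpos : 0 < (volume N).toReal := by
    refine ENNReal.toReal_pos (fun h => ?_) hNfin
    have := measure_mono_null hNright h
    rw [Real.volume_Ioo, ENNReal.ofReal_eq_zero] at this
    linarith
  have hxint : IntegrableOn x N :=
    (hcont.integrableOn_compact isCompact_Icc).mono_set hNsub
  have hcint : IntegrableOn (fun _ : ℝ => d + ε) N := integrableOn_const hNfin
  have hg1 : IntegrableOn ((Ioo (1/2) a₃).indicator fun _ : ℝ => ε/2) N :=
    (integrableOn_const hNfin : IntegrableOn (fun _ : ℝ => ε/2) N).indicator measurableSet_Ioo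
  have hg2 : IntegrableOn ((Icc a₁ a₂).indicator fun _ : ℝ => d + ε) N :=
    hcint.indicator measurableSet_Icc
  have key : ∫ β in N, ((Ioo (1/2) a₃).indicator (fun _ : ℝ => ε/2) β
      - (Icc a₁ a₂).indicator (fun _ : ℝ => d + ε) β) ≤ ∫ β in N, (x β - (d + ε)) := by
    refine setIntegral_mono_on (hg1.sub hg2) (hxint.sub hcint) hNmeas fun β hβ => ?_
    have hge := hNleft β hβ
    have h0 := hnonneg β hβ.1
    by_cases h2 : β ≤ a₂
    · rw [indicator_of_mem (show β ∈ Icc a₁ a₂ from ⟨hge, h2⟩),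
        indicator_of_notMem (fun h => by linarith [h.1])]
      linarith
    · push Not at h2
      rw [indicator_of_notMem (fun h : β ∈ Icc a₁ a₂ => by linarith [h.2])]
      by_cases h3 : β ∈ Ioo (1/2) a₃
      · rw [indicator_of_mem h3]
        have := hmono hmidI hβ.1 h3.1.le
        linarith
      · rw [indicator_of_notMem h3]
        have := hright β hβ.1 h2
        linarith
  rw [integral_sub hg1 hg2, integral_sub hxint hcint, setIntegral_indicator measurableSet_Ioo,
    setIntegral_indicator measurableSet_Icc, inter_eq_right.2 hNright, setIntegral_const,
    setIntegral_const, setIntegral_const] at key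
  have hv1 : volume.real (Ioo (1/2) a₃) = a₃ - 1/2 := by
    rw [Real.volume_real_Ioo_of_le hhalf'.le]
  have hv2 : volume.real (N ∩ Icc a₁ a₂) ≤ a₂ - a₁ := by
    rw [← Real.volume_real_Icc_of_le h₁₂]
    exact measureReal_mono inter_subset_right (by simp)
  have hv3 : volume.real N = (volume N).toReal := rfl
  rw [hv1, hv3] at key
  simp only [smul_eq_mul] at key
  rw [hy, ge_iff_le]
  change ε + d ≤ (∫ β in N, x β) / (volume N).toReal
  rw [le_div_iff₀ hNpos]
  have hdef : volume.real (N ∩ Icc a₁ a₂) * (d + ε) ≤ (a₃ - 1/2) * (ε/2) := by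
    calc volume.real (N ∩ Icc a₁ a₂) * (d + ε) ≤ (a₂ - a₁) * (8/5) := by
          apply mul_le_mul hv2 (by linarith) (by linarith) (by linarith)
      _ = (ε * (a₃ - a₂)) * (ε * (8/5)) := by rw [hlenB]; ring
      _ ≤ (ε * (a₃ - a₂)) * (1/4) := by
          apply mul_le_mul_of_nonneg_left (by linarith) (by positivity)
      _ = (a₃ - 1/2) * (ε/2) := by
          rw [show a₂ = 1 - a₃ by linarith]; ring
  linarith
end

section
/- Under the construction setup with assumptions (I)–(VI): if β ∈ [0,1] is an agent whose opinion satisfies x(β) = x(0) + 1 (i.e. x(β) equals the minimum of x(A) plus one), then the updated opinion satisfies y(β) < Ā + 2ε², and hence y(β) < ε. -/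
open MeasureTheory Set

/-- The agent `β` whose opinion is the minimum of `x(A)` plus one gets updated
opinion below `Ā + 2ε²`, hence below `ε` (so it leaves `ℬ` on the left). -/
theorem hk_beta_escapes_left
    -- the confidence/width parameter ε and the fixed constant d = 3/2
    (ε d : ℝ) (hε : 0 < ε) (hε' : ε ≤ 1/10) (hd : d = 3/2)
    -- partition of [0,1] into consecutive closed intervals A, B, C, D, E
    (a₁ a₂ a₃ a₄ : ℝ)
    (h₀₁ : 0 ≤ a₁) (h₁₂ : a₁ ≤ a₂) (h₂₃ : a₂ ≤ a₃) (h₃₄ : a₃ ≤ a₄) (h₄₅ : a₄ ≤ 1)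
    (A B C D E : Set ℝ)
    (hA : A = Icc 0 a₁) (hB : B = Icc a₁ a₂) (hC : C = Icc a₂ a₃)
    (hD : D = Icc a₃ a₄) (hE : E = Icc a₄ 1)
    -- |B| = |D| = ε²|C|, |C| = ε²|A| = ε²|E| (symmetric about 1/2)
    (hlenB : a₂ - a₁ = ε^2 * (a₃ - a₂))
    (hlenD : a₄ - a₃ = ε^2 * (a₃ - a₂))
    (hlenC : a₃ - a₂ = ε^2 * a₁)
    (hlenE : 1 - a₄ = a₁)
    -- the opinion function x : regular, nonnegative, anti-symmetric about 1/2
    (x : ℝ → ℝ) (hreg : Regular x)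
    (hnonneg : ∀ α ∈ Icc (0:ℝ) 1, 0 ≤ x α)
    (hsym : ∀ s ∈ Icc (0:ℝ) (1/2), x (1/2 + s) + x (1/2 - s) = 2 * x (1/2))
    (hmid : x (1/2) = d + 3*ε/2)
    -- the sets A_x = x⁻¹([0,2ε]), B_x = x⁻¹([2ε, d+ε]) and the mean Ā on A_x
    (Ax Bx : Set ℝ) (Abar : ℝ)
    (hAx : Ax = {α ∈ Icc (0:ℝ) 1 | x α ∈ Icc 0 (2*ε)})
    (hBx : Bx = {α ∈ Icc (0:ℝ) 1 | x α ∈ Icc (2*ε) (d + ε)})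
    (hAbar : Abar = (∫ α in Ax, x α) / (volume Ax).toReal)
    -- derivative bounds e, s > 0
    (e s : ℝ) (he : 0 < e) (hs : 0 < s)
    -- Assumptions (I)–(VI)
    (hI : A ⊆ Ax)
    (hII : Bx ⊆ B)
    (hIII : x '' A ⊆ Icc 0 ε)
    (hIV : ∀ α ∈ A, DifferentiableAt ℝ x α → deriv x α ≤ e)
    (hV : ∀ α ∈ Bx, DifferentiableAt ℝ x α → s ≤ deriv x α)
    (hVI : ε - Abar > 2*ε^2)
    -- the updated opinion function y = Tx
    (y : ℝ → ℝ) (hy : y = hkT x)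
    (β : ℝ) (hβ : β ∈ Icc (0:ℝ) 1) (hβx : x β = x 0 + 1) :
    y β < Abar + 2*ε^2 ∧ y β < ε := by
  obtain ⟨hc, hm, -⟩ := hreg
  subst hd hA hB hAx hBx hy
  have hε2 : 0 < ε^2 := by positivity
  have hε2' : ε^2 ≤ 1/100 := by nlinarith
  have ha1 : 0 < a₁ := by
    rcases h₀₁.lt_or_eq with h | h
    · exact h
    · rw [← h] at hlenC hlenE hlenB
      have : a₃ - a₂ = 0 := by rw [hlenC]; ring
      rw [this] at hlenB hlenD
      linarith
  have ha32 : a₃ = 1 - a₂ := by linarith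
  have ha2h : a₂ ≤ 1/2 := by linarith
  have h0m : (0:ℝ) ∈ Icc (0:ℝ) 1 := by simp
  have hsym' : ∀ t ∈ Icc (0:ℝ) (1/2), x t + x (1 - t) = 3 + 3 * ε := by
    intro t ht
    have := hsym (1/2 - t) ⟨by linarith [ht.2], by linarith [ht.1]⟩
    rw [show (1/2 + (1/2 - t) : ℝ) = 1 - t by ring, show (1/2 - (1/2 - t) : ℝ) = t by ring] at this
    linarith
  have hA' : ∀ t ∈ Icc 0 a₁, x t ≤ ε := fun t ht => (hIII ⟨t, ht, rfl⟩).2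
  have hx0 : x 0 ≤ ε := hA' 0 ⟨le_rfl, h₀₁⟩
  have hx0' : 0 ≤ x 0 := hnonneg 0 h0m
  have hxa2 : 3/2 + ε ≤ x a₂ := by
    by_contra hlt
    push Not at hlt
    have hcc : ContinuousOn x (Icc a₂ (1/2)) :=
      hc.mono (Icc_subset_Icc (by linarith) (by norm_num))
    obtain ⟨t, ht, htx⟩ := intermediate_value_Icc ha2h hcc
      (show (3/2 + ε) ∈ Icc (x a₂) (x (1/2)) from ⟨hlt.le, by linarith⟩)
    have := hII (show t ∈ _ from ⟨⟨by linarith [ht.1], by linarith [ht.2]⟩,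
      by rw [htx]; constructor <;> linarith⟩)
    have : t = a₂ := le_antisymm this.2 ht.1
    rw [this] at htx
    linarith
  have hxa3 : x a₃ ≤ 3/2 + 2 * ε := by
    have := hsym' a₂ ⟨by linarith, ha2h⟩
    rw [ha32]; linarith
  set Ax : Set ℝ := {α ∈ Icc (0:ℝ) 1 | x α ∈ Icc 0 (2*ε)} with hAx
  set N := hkNbhd x β with hN
  have hNmem : ∀ t, t ∈ N ↔ t ∈ Icc (0:ℝ) 1 ∧ x t ≤ x 0 + 2 := by
    intro t
    simp only [hN, hkNbhd, mem_setOf_eq, hβx, abs_le]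
    constructor
    · rintro ⟨h1, h2, h3⟩; exact ⟨h1, by linarith⟩
    · rintro ⟨h1, h2⟩
      exact ⟨h1, by linarith [hm h0m h1 h1.1], by linarith⟩
  have hAxm : MeasurableSet Ax :=
    (hc.preimage_isClosed_of_isClosed isClosed_Icc (t := Icc 0 (2*ε)) isClosed_Icc).measurableSet
  have hNm : MeasurableSet N := by
    have : N = Icc (0:ℝ) 1 ∩ x ⁻¹' (Iic (x 0 + 2)) := by
      ext t; rw [hNmem]; rfl
    rw [this]
    exact (hc.preimage_isClosed_of_isClosed isClosed_Icc isClosed_Iic).measurableSet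
  have hAN : Ax ⊆ N := fun t ht => (hNmem t).2 ⟨ht.1, by linarith [ht.2.2]⟩
  have hint : IntegrableOn x (Icc 0 1) := hc.integrableOn_Icc
  have hNI : N ⊆ Icc 0 1 := fun t ht => ((hNmem t).1 ht).1
  have hF : ∀ t ∈ N \ Ax, a₁ < t ∧ t < a₄ ∧ 0 ≤ x t ∧ x t ≤ 21/10 := by
    rintro t ⟨htN, htA⟩
    obtain ⟨ht1, ht2⟩ := (hNmem t).1 htN
    refine ⟨?_, ?_, hnonneg t ht1, by linarith⟩
    · by_contra h
      push Not at h
      exact htA (hI ⟨ht1.1, h⟩)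
    · by_contra h
      push Not at h
      have h1 := hA' (1 - t) ⟨by linarith [ht1.2], by linarith⟩
      have h2 := hsym' (1 - t) ⟨by linarith [ht1.2], by linarith⟩
      rw [show 1 - (1 - t) = t by ring] at h2
      linarith
  have hFm : MeasurableSet (N \ Ax) := hNm.diff hAxm
  have hfin : ∀ S ⊆ Icc (0:ℝ) 1, volume S ≠ ⊤ := fun S hS =>
    ((measure_mono hS).trans_lt (by simp)).ne
  have hI1 : ∫ t in (N \ Ax) ∩ Iic a₃, x t ≤ 17/10 * (a₃ - a₁) := by
    have hsub : (N \ Ax) ∩ Iic a₃ ⊆ Icc a₁ a₃ := fun t ht => ⟨(hF t ht.1).1.le, ht.2⟩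
    have hb := norm_setIntegral_le_of_norm_le_const (μ := volume) (f := x) (C := 17/10)
      (s := (N \ Ax) ∩ Iic a₃) (hfin _ fun t ht => hNI ht.1.1).lt_top (by
        intro t ht
        have h1 := hF t ht.1
        rw [Real.norm_of_nonneg h1.2.2.1]
        have := hm (hNI ht.1.1) ⟨by linarith, by linarith⟩ ht.2
        linarith)
    have hv : volume.real ((N \ Ax) ∩ Iic a₃) ≤ a₃ - a₁ := by
      have := measureReal_mono (μ := volume) hsub (by simp)
      rwa [Real.volume_real_Icc_of_le (by linarith)] at this
    have := Real.le_norm_self (∫ t in (N \ Ax) ∩ Iic a₃, x t)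
    linarith
  have hI2 : ∫ t in (N \ Ax) \ Iic a₃, x t ≤ 21/10 * (a₄ - a₃) := by
    have hsub : (N \ Ax) \ Iic a₃ ⊆ Icc a₃ a₄ := fun t ht =>
      ⟨(not_le.1 ht.2).le, (hF t ht.1).2.1.le⟩
    have hb := norm_setIntegral_le_of_norm_le_const (μ := volume) (f := x) (C := 21/10)
      (s := (N \ Ax) \ Iic a₃) (hfin _ fun t ht => hNI ht.1.1).lt_top (by
        intro t ht
        have h1 := hF t ht.1
        rw [Real.norm_of_nonneg h1.2.2.1]
        exact h1.2.2.2)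
    have hv : volume.real ((N \ Ax) \ Iic a₃) ≤ a₄ - a₃ := by
      have := measureReal_mono (μ := volume) hsub (by simp)
      rwa [Real.volume_real_Icc_of_le (by linarith)] at this
    have := Real.le_norm_self (∫ t in (N \ Ax) \ Iic a₃, x t)
    linarith
  have hIF : ∫ t in N \ Ax, x t =
      (∫ t in (N \ Ax) ∩ Iic a₃, x t) + ∫ t in (N \ Ax) \ Iic a₃, x t :=
    (integral_inter_add_diff measurableSet_Iic (hint.mono_set fun t ht => hNI ht.1)).symm
  have hIN : ∫ t in N, x t = (∫ t in Ax, x t) + ∫ t in N \ Ax, x t := by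
    rw [← integral_inter_add_diff hAxm (hint.mono_set hNI), inter_eq_self_of_subset_right hAN]
  have hvN : volume.real N = volume.real Ax + volume.real (N \ Ax) := by
    rw [← measureReal_inter_add_diff (μ := volume) (s := N) hAxm (hfin N hNI),
      inter_eq_self_of_subset_right hAN]
  have hvA : a₁ ≤ volume.real Ax := by
    have := measureReal_mono (μ := volume) hI (hfin Ax (hAN.trans hNI))
    rwa [Real.volume_real_Icc_of_le h₀₁, sub_zero] at this
  have hIA0 : 0 ≤ ∫ t in Ax, x t := setIntegral_nonneg hAxm fun t ht => ht.2.1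
  have hvF : 0 ≤ volume.real (N \ Ax) := measureReal_nonneg
  have hAb : Abar = (∫ t in Ax, x t) / volume.real Ax := hAbar
  have hAb0 : 0 ≤ Abar := by rw [hAb]; exact div_nonneg hIA0 measureReal_nonneg
  have hIA : ∫ t in Ax, x t = Abar * volume.real Ax := by
    rw [hAb, div_mul_cancel₀]
    linarith
  have key : hkT x β < Abar + 2 * ε^2 := by
    change (∫ t in N, x t) / volume.real N < _
    rw [div_lt_iff₀ (by linarith), hIN, hvN, hIA, hIF]
    have h1 : 0 ≤ (Abar + 2*ε^2) * volume.real (N \ Ax) := by positivity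
    have h2 : ε^2 * a₁ ≤ ε^2 * volume.real Ax := by gcongr
    have h3 : 0 < ε^2 * a₁ := by positivity
    have h4 : ε^2 * (a₃ - a₂) ≤ 1/100 * (ε^2 * a₁) := by
      rw [hlenC]; gcongr
    nlinarith
  exact ⟨key, by linarith⟩
end

section
/- Let x : [0,1] → ℝ be regular, strictly increasing, with x(1) − x(0) > 2. Define u, v, w : [0,1] → [0,1] by u(α) = 0 if x(α) ≤ x(0) + 1 and u(α) = x⁻¹(x(α) − 1) otherwise; v(α) = 1 if x(α) ≥ x(1) − 1 and v(α) = x⁻¹(x(α) + 1) otherwise; and w = v − u. Then at every α ∈ [0,1] at which u, v and Tx are differentiable, the derivative of the HK update satisfies (Tx)′(α) = (1/w(α))·[u′(α)·(1 + Tx(α) − x(α)) + v′(α)·(1 + x(α) − Tx(α))]. -/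
open MeasureTheory Set

/-- Lemma 5 of the paper: the formula for the derivative of the HK update of a
regular, strictly increasing `x` with `x(1) − x(0) > 2`, in terms of the
window-endpoint functions `u` and `v` (with `w = v − u`). -/
theorem hk_deriv_formula (x : ℝ → ℝ) (hreg : Regular x)
    (hmono : StrictMonoOn x (Icc 0 1))
    (hrange : x 1 - x 0 > 2)
    (u v w : ℝ → ℝ)
    -- u(α) = 0 if x(α) ≤ x(0) + 1, and u(α) = x⁻¹(x(α) − 1) otherwise
    (hu_mem : ∀ α ∈ Icc (0:ℝ) 1, u α ∈ Icc (0:ℝ) 1)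
    (hu_low : ∀ α ∈ Icc (0:ℝ) 1, x α ≤ x 0 + 1 → u α = 0)
    (hu_inv : ∀ α ∈ Icc (0:ℝ) 1, x 0 + 1 < x α → x (u α) = x α - 1)
    -- v(α) = 1 if x(α) ≥ x(1) − 1, and v(α) = x⁻¹(x(α) + 1) otherwise
    (hv_mem : ∀ α ∈ Icc (0:ℝ) 1, v α ∈ Icc (0:ℝ) 1)
    (hv_high : ∀ α ∈ Icc (0:ℝ) 1, x 1 - 1 ≤ x α → v α = 1)
    (hv_inv : ∀ α ∈ Icc (0:ℝ) 1, x α < x 1 - 1 → x (v α) = x α + 1)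
    (hw : w = v - u) :
    ∀ α ∈ Icc (0:ℝ) 1, DifferentiableAt ℝ u α → DifferentiableAt ℝ v α →
      DifferentiableAt ℝ (hkT x) α →
      deriv (hkT x) α = (1 / w α) *
        (deriv u α * (1 + hkT x α - x α) + deriv v α * (1 + x α - hkT x α)) := by
  obtain ⟨hc, -, -⟩ := hreg
  have h0 : (0:ℝ) ∈ Icc (0:ℝ) 1 := by simp
  have h1 : (1:ℝ) ∈ Icc (0:ℝ) 1 := by simp
  -- lower end of the window
  have hlow : ∀ α ∈ Icc (0:ℝ) 1, ∀ β ∈ Icc (0:ℝ) 1, (x α - 1 ≤ x β ↔ u α ≤ β) := by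
    intro α hα β hβ
    rcases le_or_gt (x α) (x 0 + 1) with h | h
    · have h2 := hmono.monotoneOn h0 hβ hβ.1
      rw [hu_low α hα h]
      exact ⟨fun _ => hβ.1, fun _ => by linarith⟩
    · rw [← hu_inv α hα h]
      exact hmono.le_iff_le (hu_mem α hα) hβ
  have hhigh : ∀ α ∈ Icc (0:ℝ) 1, ∀ β ∈ Icc (0:ℝ) 1, (x β ≤ x α + 1 ↔ β ≤ v α) := by
    intro α hα β hβ
    rcases le_or_gt (x 1 - 1) (x α) with h | h
    · have h2 := hmono.monotoneOn hβ h1 hβ.2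
      rw [hv_high α hα h]
      exact ⟨fun _ => hβ.2, fun _ => by linarith⟩
    · rw [← hv_inv α hα h]
      exact hmono.le_iff_le hβ (hv_mem α hα)
  have hN : ∀ α ∈ Icc (0:ℝ) 1, hkNbhd x α = Icc (u α) (v α) := by
    intro α hα
    ext β
    constructor
    · rintro ⟨hβ, h⟩
      rw [abs_le] at h
      exact ⟨(hlow α hα β hβ).1 (by linarith), (hhigh α hα β hβ).1 (by linarith)⟩
    · rintro ⟨h, h'⟩
      have hβ : β ∈ Icc (0:ℝ) 1 := ⟨(hu_mem α hα).1.trans h, h'.trans (hv_mem α hα).2⟩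
      refine ⟨hβ, abs_le.2 ⟨?_, ?_⟩⟩
      · linarith [(hlow α hα β hβ).2 h]
      · linarith [(hhigh α hα β hβ).2 h']
  have hlt : ∀ α ∈ Icc (0:ℝ) 1, u α < v α := by
    intro α hα
    have hu : u α ≤ α := (hlow α hα α hα).1 (by linarith)
    have hv : α ≤ v α := (hhigh α hα α hα).1 (by linarith)
    rcases le_or_gt (x α) (x 0 + 1) with h | h
    · have h2 := hv_inv α hα (by linarith)
      have : α < v α := (hmono.lt_iff_lt hα (hv_mem α hα)).1 (by linarith)
      linarith
    · have h2 := hu_inv α hα h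
      have : u α < α := (hmono.lt_iff_lt (hu_mem α hα) hα).1 (by linarith)
      linarith
  -- continuous extension of `x`
  let y : ℝ → ℝ := IccExtend (zero_le_one (α := ℝ)) ((Icc (0:ℝ) 1).domRestrict x)
  have hy : Continuous y := (continuousOn_iff_continuous_domRestrict.1 hc).Icc_extend'
  have hyx : ∀ β ∈ Icc (0:ℝ) 1, y β = x β := fun β hβ => IccExtend_of_mem _ _ hβ
  let G : ℝ → ℝ := fun t => ∫ s in (0:ℝ)..t, y s
  have hG : ∀ t, HasDerivAt G (y t) t := fun t => hy.integral_hasStrictDerivAt 0 t |>.hasDerivAt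
  have hT : ∀ α ∈ Icc (0:ℝ) 1, hkT x α = (G (v α) - G (u α)) / (v α - u α) := by
    intro α hα
    have hle := (hlt α hα).le
    have e1 : (∫ β in Icc (u α) (v α), x β) = G (v α) - G (u α) := by
      have : G (v α) - G (u α) = ∫ s in (u α)..(v α), y s :=
        intervalIntegral.integral_interval_sub_left (hy.intervalIntegrable _ _)
          (hy.intervalIntegrable _ _)
      rw [this, intervalIntegral.integral_of_le hle, ← integral_Icc_eq_integral_Ioc]
      refine setIntegral_congr_fun measurableSet_Icc fun β hβ => ?_
      exact (hyx β ⟨(hu_mem α hα).1.trans hβ.1, hβ.2.trans (hv_mem α hα).2⟩).symm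
    unfold hkT
    rw [hN α hα, e1, Real.volume_Icc, ENNReal.toReal_ofReal (by linarith)]
  intro α hα hdu hdv hdT
  have hud : UniqueDiffWithinAt ℝ (Icc (0:ℝ) 1) α := uniqueDiffOn_Icc zero_lt_one α hα
  have hwpos : 0 < v α - u α := by linarith [hlt α hα]
  have hGu := ((hG (u α)).comp α hdu.hasDerivAt).hasDerivWithinAt (s := Icc (0:ℝ) 1)
  have hGv := ((hG (v α)).comp α hdv.hasDerivAt).hasDerivWithinAt (s := Icc (0:ℝ) 1)
  have hq := (hGv.sub hGu).div
    ((hdv.hasDerivAt.sub hdu.hasDerivAt).hasDerivWithinAt (s := Icc (0:ℝ) 1)) hwpos.ne'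
  have hquot := hq.congr (f₁ := hkT x) (fun β hβ => by rw [hT β hβ]; rfl) (by rw [hT α hα]; rfl)
  have hmain := hud.eq_deriv _ hdT.hasDerivAt.hasDerivWithinAt hquot
  -- the endpoint identities
  have ku : deriv u α * (x (u α) - x α + 1) = 0 := by
    rcases lt_trichotomy (x α) (x 0 + 1) with h | h | h
    · have hev : ∀ᶠ β in nhdsWithin α (Icc (0:ℝ) 1), u β = 0 := by
        filter_upwards [(hc α hα).eventually_lt_const h, self_mem_nhdsWithin] with β hβ hβ'
        exact hu_low β hβ' hβ.le
      have hz := (hasDerivWithinAt_const α (Icc (0:ℝ) 1) (0:ℝ)).congr_of_eventuallyEq hev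
        (hu_low α hα h.le)
      rw [hud.eq_deriv _ hdu.hasDerivAt.hasDerivWithinAt hz, zero_mul]
    · rw [hu_low α hα h.le, h]; ring
    · rw [hu_inv α hα h]; ring
  have kv : deriv v α * (x (v α) - x α - 1) = 0 := by
    rcases lt_trichotomy (x 1 - 1) (x α) with h | h | h
    · have hev : ∀ᶠ β in nhdsWithin α (Icc (0:ℝ) 1), v β = 1 := by
        filter_upwards [(hc α hα).eventually_const_lt h, self_mem_nhdsWithin] with β hβ hβ'
        exact hv_high β hβ' hβ.le
      have hz := (hasDerivWithinAt_const α (Icc (0:ℝ) 1) (1:ℝ)).congr_of_eventuallyEq hev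
        (hv_high α hα h.le)
      rw [hud.eq_deriv _ hdv.hasDerivAt.hasDerivWithinAt hz, zero_mul]
    · rw [hv_high α hα h.le, ← h]; ring
    · rw [hv_inv α hα h]; ring
  have hTα : G (v α) - G (u α) = hkT x α * (v α - u α) := by
    rw [hT α hα, div_mul_cancel₀ _ hwpos.ne']
  rw [hmain, hw]
  simp only [Pi.sub_apply, Function.comp_apply]
  rw [hyx _ (hu_mem α hα), hyx _ (hv_mem α hα), hTα]
  have hne := hwpos.ne'
  rw [div_eq_iff (pow_ne_zero 2 hne)]
  have e : 1 / (v α - u α) * (deriv u α * (1 + hkT x α - x α) + deriv v α * (1 + x α - hkT x α)) *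
      (v α - u α) ^ 2 = (deriv u α * (1 + hkT x α - x α) + deriv v α * (1 + x α - hkT x α)) *
      (v α - u α) := by
    field_simp
  rw [e]
  linear_combination (v α - u α) * kv - (v α - u α) * ku
end

section
/- For the discrete HK model with N agents and opinions x : {1,…,N} → ℝ, the updated state x⁺ equals x if and only if x is an equilibrium state, i.e. if and only if |x(i) − x(j)| > 1 for all pairs i, j with x(i) ≠ x(j). -/
open Finset

/-- The discrete Hegselmann–Krause update: each agent replaces its opinion by
the average of the opinions within distance 1 of its own. -/
noncomputable def hkD {N : ℕ} (x : Fin N → ℝ) : Fin N → ℝ :=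
  fun i => (∑ j ∈ univ.filter (fun j => |x j - x i| ≤ 1), x j) /
    ((univ.filter (fun j => |x j - x i| ≤ 1)).card : ℝ)

/-- The discrete HK update fixes a state iff it is an equilibrium state,
i.e. any two distinct opinion values differ by more than 1. -/
theorem hkD_fixed_iff_equilibrium {N : ℕ} (x : Fin N → ℝ) :
    hkD x = x ↔ ∀ i j : Fin N, x i ≠ x j → 1 < |x i - x j| := by
  have key : ∀ i, hkD x i = x i ↔
      ∑ j ∈ univ.filter (fun j => |x j - x i| ≤ 1), (x j - x i) = 0 := by
    intro i
    have hpos : (0 : ℝ) < ((univ.filter (fun j => |x j - x i| ≤ 1)).card : ℝ) := by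
      exact_mod_cast Finset.card_pos.mpr ⟨i, by simp⟩
    unfold hkD
    rw [div_eq_iff hpos.ne', Finset.sum_sub_distrib, Finset.sum_const, nsmul_eq_mul,
      sub_eq_zero, mul_comm (x i)]
  constructor
  · intro h
    by_contra! hc
    obtain ⟨i₀, j₀, hne, hle⟩ := hc
    let B : Finset (Fin N) := univ.filter (fun i => ∃ j, x i ≠ x j ∧ |x i - x j| ≤ 1)
    have hB : B.Nonempty := ⟨i₀, by simpa [B] using ⟨j₀, hne, hle⟩⟩
    -- a non-isolated agent with smallest opinion
    obtain ⟨i, hi, hmin⟩ := B.exists_min_image x hB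
    have hs := (key i).1 (congrFun h i)
    rw [Finset.sum_eq_zero_iff_of_nonneg] at hs
    · obtain ⟨j, hj, hj1⟩ := (Finset.mem_filter.1 hi).2
      rw [abs_sub_comm] at hj1
      have := hs j (by simpa using hj1)
      exact hj (by linarith)
    · intro j hj
      have hj1 := (Finset.mem_filter.1 hj).2
      by_cases e : x j = x i
      · simp [e]
      · have := hmin j (Finset.mem_filter.2 ⟨mem_univ _, i, e, hj1⟩)
        linarith
  · intro h
    funext i
    refine (key i).2 (Finset.sum_eq_zero fun j hj => ?_)
    have hj1 := (Finset.mem_filter.1 hj).2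
    by_contra hne
    exact absurd (h j i (sub_ne_zero.1 hne)) (not_lt.2 hj1)
end

section
/- Consider the discrete HK model with N = 100 agents and initial state x₀(i) = −1 for 1 ≤ i ≤ 98, x₀(99) = 0, x₀(100) = 1. Then after one update, x₁(i) = −98/99 for 1 ≤ i ≤ 98, x₁(99) = −97/100, and x₁(100) = 1/2; moreover, for every t ≥ 1 one has x_t(100) = 1/2 and |x_t(100) − x_t(i)| > 1 for all i ≤ 99, so agent 100 forms a cluster by himself in the equilibrium configuration. -/
open Finset

theorem sum_hundred (f : Fin 100 → ℝ) (a : ℝ) (hf : ∀ j : Fin 100, (j : ℕ) ≤ 97 → f j = a) :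
    ∑ j, f j = 98 * a + f ⟨98, by norm_num⟩ + f ⟨99, by norm_num⟩ := by
  rw [Fin.sum_univ_castSucc, Fin.sum_univ_castSucc]
  have h1 : ∀ j : Fin 98, f (j.castSucc.castSucc) = a := fun j => hf _ (by
    have := j.2
    simp only [Fin.val_castSucc]
    omega)
  rw [Finset.sum_congr rfl (fun j _ => h1 j)]
  simp only [Finset.sum_const, Finset.card_univ, Fintype.card_fin, nsmul_eq_mul]
  push_cast
  rfl

theorem hkD_eq_ite {N : ℕ} (x : Fin N → ℝ) (i : Fin N) :
    hkD x i = (∑ j, if |x j - x i| ≤ 1 then x j else 0) /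
      (∑ j, if |x j - x i| ≤ 1 then (1 : ℝ) else 0) := by
  unfold hkD
  rw [Finset.sum_filter, Finset.sum_boole]

theorem hkD_isolated (x : Fin 100 → ℝ) (h9 : x ⟨99, by norm_num⟩ = 1 / 2)
    (hl : ∀ i : Fin 100, (i : ℕ) ≤ 98 → x i < -1 / 2) :
    hkD x ⟨99, by norm_num⟩ = 1 / 2 ∧ ∀ i : Fin 100, (i : ℕ) ≤ 98 → hkD x i < -1 / 2 := by
  constructor
  · have hs : (univ.filter (fun j => |x j - x ⟨99, by norm_num⟩| ≤ 1))
        = {(⟨99, by norm_num⟩ : Fin 100)} := by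
      ext j
      simp only [mem_filter, mem_univ, true_and, mem_singleton]
      constructor
      · intro hj
        by_contra hne
        have h98 : (j : ℕ) ≤ 98 := by
          have h1 := j.2
          have h2 : (j : ℕ) ≠ 99 := fun h => hne (Fin.ext h)
          omega
        have h3 := hl j h98
        rw [h9] at hj
        have h4 := (abs_le.mp hj).1
        linarith
      · rintro rfl
        simp
    unfold hkD
    rw [hs]
    rw [Finset.sum_singleton, Finset.card_singleton, h9]
    norm_num
  · intro i hi
    unfold hkD
    have hne : (univ.filter (fun j => |x j - x i| ≤ 1)).Nonempty := ⟨i, by simp⟩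
    have hc : (0 : ℝ) < ((univ.filter (fun j => |x j - x i| ≤ 1)).card : ℝ) := by
      exact_mod_cast hne.card_pos
    rw [div_lt_iff₀ hc]
    have hlt := Finset.sum_lt_sum_of_nonempty (f := x) (g := fun _ => (-1 / 2 : ℝ)) hne (by
      intro j hj
      simp only [mem_filter, mem_univ, true_and] at hj
      by_cases h98 : (j : ℕ) ≤ 98
      · exact hl j h98
      · exfalso
        have h1 := j.2
        have h2 : j = ⟨99, by norm_num⟩ := Fin.ext (by simp only; omega)
        rw [h2, h9] at hj
        have h3 := hl i hi
        have h4 := (abs_le.mp hj).2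
        linarith)
    rw [Finset.sum_const, nsmul_eq_mul] at hlt
    linarith

/-- The 100-agent example (3) of the paper: 98 agents at −1, one at 0, one at 1.
After one step the opinions are −98/99 (98 agents), −97/100 and 1/2, and agent
100 stays isolated at 1/2 forever, forming a cluster by himself. -/
theorem hkD_uneven_example (x₀ : Fin 100 → ℝ)
    (h : ∀ i : Fin 100,
      x₀ i = if (i : ℕ) ≤ 97 then -1 else if (i : ℕ) = 98 then 0 else 1) :
    (∀ i : Fin 100, (i : ℕ) ≤ 97 → hkD^[1] x₀ i = -98/99) ∧
    hkD^[1] x₀ ⟨98, by norm_num⟩ = -97/100 ∧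
    hkD^[1] x₀ ⟨99, by norm_num⟩ = 1/2 ∧
    (∀ t : ℕ, 1 ≤ t →
      hkD^[t] x₀ ⟨99, by norm_num⟩ = 1/2 ∧
      ∀ i : Fin 100, (i : ℕ) ≤ 98 →
        1 < |hkD^[t] x₀ ⟨99, by norm_num⟩ - hkD^[t] x₀ i|) := by
  have h98 : x₀ ⟨98, by norm_num⟩ = 0 := by rw [h]; norm_num
  have h99 : x₀ ⟨99, by norm_num⟩ = 1 := by rw [h]; norm_num
  have hlo : ∀ j : Fin 100, (j : ℕ) ≤ 97 → x₀ j = -1 := fun j hj => by rw [h, if_pos hj]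
  have e1 : ∀ i : Fin 100, (i : ℕ) ≤ 97 → hkD x₀ i = -98/99 := by
    intro i hi
    rw [hkD_eq_ite, hlo i hi,
      sum_hundred _ (-1) (fun j hj => by rw [hlo j hj]; norm_num),
      sum_hundred _ 1 (fun j hj => by rw [hlo j hj]; norm_num), h98, h99]
    norm_num
  have e2 : hkD x₀ ⟨98, by norm_num⟩ = -97/100 := by
    rw [hkD_eq_ite, h98,
      sum_hundred _ (-1) (fun j hj => by rw [hlo j hj]; norm_num),
      sum_hundred _ 1 (fun j hj => by rw [hlo j hj]; norm_num), h98, h99]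
    norm_num
  have e3 : hkD x₀ ⟨99, by norm_num⟩ = 1/2 := by
    rw [hkD_eq_ite, h99,
      sum_hundred _ 0 (fun j hj => by rw [hlo j hj]; norm_num),
      sum_hundred _ 0 (fun j hj => by rw [hlo j hj]; norm_num), h98, h99]
    norm_num
  have key : ∀ t : ℕ, 1 ≤ t → hkD^[t] x₀ ⟨99, by norm_num⟩ = 1/2 ∧
      ∀ i : Fin 100, (i : ℕ) ≤ 98 → hkD^[t] x₀ i < -1/2 := by
    intro t ht
    induction t, ht using Nat.le_induction with
    | base =>
      rw [Function.iterate_one]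
      refine ⟨e3, fun i hi => ?_⟩
      by_cases h97 : (i : ℕ) ≤ 97
      · rw [e1 i h97]; norm_num
      · have h2 : i = ⟨98, by norm_num⟩ := Fin.ext (by simp only; omega)
        rw [h2, e2]; norm_num
    | succ n hn ih =>
      rw [Function.iterate_succ_apply']
      exact hkD_isolated _ ih.1 ih.2
  refine ⟨e1, e2, e3, fun t ht => ⟨(key t ht).1, fun i hi => ?_⟩⟩
  have h1 := (key t ht).2 i hi
  rw [(key t ht).1]
  exact lt_of_lt_of_le (by linarith) (le_abs_self _)
end

section
/- Let x : [0,1] → ℝ be regular (in particular continuous and strictly increasing). Then the HK update Tx is a constant function if and only if x(1) − x(0) ≤ 1. -/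
open MeasureTheory Set

lemma hk_aux_pos (f : ℝ → ℝ) (hf : ContinuousOn f (Icc 0 1)) (c p : ℝ) (hp : p ∈ Icc (0:ℝ) 1)
    (h : f p < c) (S : Set ℝ) (hS : ∀ β ∈ Icc (0:ℝ) 1, f β < c → β ∈ S) : 0 < volume S := by
  obtain ⟨u, hu, hu2⟩ := (continuousOn_iff'.1 hf) (Iio c) isOpen_Iio
  have hpu : p ∈ u := by
    have : p ∈ f ⁻¹' Iio c ∩ Icc 0 1 := ⟨h, hp⟩
    rw [hu2] at this
    exact this.1
  have hcl : p ∈ closure (Ioo (0:ℝ) 1) := by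
    rw [closure_Ioo (by norm_num)]; exact hp
  have hne : (u ∩ Ioo (0:ℝ) 1).Nonempty := mem_closure_iff.1 hcl u hu hpu
  refine lt_of_lt_of_le ((hu.inter isOpen_Ioo).measure_pos volume hne) (measure_mono ?_)
  intro β hβ
  have hI : β ∈ Icc (0:ℝ) 1 := Ioo_subset_Icc_self hβ.2
  have : β ∈ u ∩ Icc (0:ℝ) 1 := ⟨hβ.1, hI⟩
  rw [← hu2] at this
  exact hS β hI this.1

lemma hk_aux_avg (f : ℝ → ℝ) (hf : ContinuousOn f (Icc 0 1)) (c : ℝ) (S : Set ℝ)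
    (hSI : S ⊆ Icc 0 1) (hSm : MeasurableSet S) (h1 : ∀ β ∈ S, f β ≤ c)
    (h2 : ∀ β ∈ Icc (0:ℝ) 1 \ S, c < f β) (hS : 0 < volume S)
    (hD : 0 < volume (Icc (0:ℝ) 1 \ S)) :
    (∫ β in S, f β) / (volume S).toReal < ∫ β in Icc (0:ℝ) 1, f β := by
  have hfi : IntegrableOn f (Icc 0 1) := hf.integrableOn_Icc
  have hDm : MeasurableSet (Icc (0:ℝ) 1 \ S) := measurableSet_Icc.diff hSm
  have hSfin : volume S ≠ ⊤ := measure_ne_top_of_subset hSI (by simp)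
  have hDfin : volume (Icc (0:ℝ) 1 \ S) ≠ ⊤ := measure_ne_top_of_subset sdiff_subset (by simp)
  have hfS := hfi.mono_set hSI
  have hfD : IntegrableOn f (Icc (0:ℝ) 1 \ S) := hfi.mono_set sdiff_subset
  have hsum : ∫ β in Icc (0:ℝ) 1, f β = (∫ β in S, f β) + ∫ β in Icc (0:ℝ) 1 \ S, f β := by
    rw [← setIntegral_union disjoint_sdiff_right hDm hfS hfD, union_sdiff_cancel hSI]
  have hmu : (volume S).toReal + (volume (Icc (0:ℝ) 1 \ S)).toReal = 1 := by
    rw [← ENNReal.toReal_add hSfin hDfin, ← measure_union disjoint_sdiff_right hDm,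
      union_sdiff_cancel hSI]
    simp
  have hcS : IntegrableOn (fun _ : ℝ => c) S := integrableOn_const hSfin
  have hcD : IntegrableOn (fun _ : ℝ => c) (Icc (0:ℝ) 1 \ S) := integrableOn_const hDfin
  have hP : (∫ β in S, f β) ≤ (volume S).toReal * c := by
    have := setIntegral_mono_on hfS hcS hSm h1
    simpa [Measure.real] using this
  have hQ : (volume (Icc (0:ℝ) 1 \ S)).toReal * c < ∫ β in Icc (0:ℝ) 1 \ S, f β := by
    have : 0 < ∫ β in Icc (0:ℝ) 1 \ S, (f β - c) := by
      rw [setIntegral_pos_iff_support_of_nonneg_ae]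
      · refine lt_of_lt_of_le hD (measure_mono ?_)
        intro β hβ
        exact ⟨(sub_pos.2 (h2 β hβ)).ne', hβ⟩
      · filter_upwards [ae_restrict_mem hDm] with β hβ
        exact (sub_pos.2 (h2 β hβ)).le
      · exact hfD.sub hcD
    rw [integral_sub hfD hcD] at this
    simp only [integral_const, Measure.restrict_apply_univ,
      smul_eq_mul, Measure.real] at this
    linarith
  have hs : 0 < (volume S).toReal := ENNReal.toReal_pos hS.ne' hSfin
  have hd : 0 < (volume (Icc (0:ℝ) 1 \ S)).toReal := ENNReal.toReal_pos hD.ne' hDfin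
  rw [hsum, div_lt_iff₀ hs]
  generalize (volume S).toReal = s at *
  generalize (volume (Icc (0:ℝ) 1 \ S)).toReal = d at *
  generalize (∫ β in S, f β) = P at *
  generalize (∫ β in Icc (0:ℝ) 1 \ S, f β) = Q at *
  obtain rfl : s = 1 - d := by linarith
  nlinarith [mul_le_mul_of_nonneg_left hP hd.le, mul_lt_mul_of_pos_left hQ hs]

/-- For a regular (hence continuous and strictly increasing) opinion function,
the HK update is constant iff the range of opinions is at most one. -/
theorem hk_consensus_iff_range_le_one (x : ℝ → ℝ) (hreg : Regular x) :
    (∃ c : ℝ, ∀ α ∈ Icc (0:ℝ) 1, hkT x α = c) ↔ x 1 - x 0 ≤ 1 := by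
  obtain ⟨hc, hm, -⟩ := hreg
  have m0 : (0:ℝ) ∈ Icc (0:ℝ) 1 := by simp
  have m1 : (1:ℝ) ∈ Icc (0:ℝ) 1 := by simp
  have lo : ∀ β ∈ Icc (0:ℝ) 1, x 0 ≤ x β := fun β hβ => hm m0 hβ hβ.1
  have hi : ∀ β ∈ Icc (0:ℝ) 1, x β ≤ x 1 := fun β hβ => hm hβ m1 hβ.2
  constructor
  · rintro ⟨c, h⟩
    by_contra! hlt
    have hmeas : ∀ α, MeasurableSet (hkNbhd x α) := by
      intro α
      have hcl : IsClosed (Icc (0:ℝ) 1 ∩ (fun β => |x β - x α|) ⁻¹' Iic 1) :=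
        ((hc.sub continuousOn_const).abs).preimage_isClosed_of_isClosed isClosed_Icc isClosed_Iic
      exact hcl.measurableSet
    have hsub : ∀ α, hkNbhd x α ⊆ Icc 0 1 := fun α β hβ => hβ.1
    have e0 : hkT x 0 < ∫ β in Icc (0:ℝ) 1, x β := by
      refine hk_aux_avg x hc (x 0 + 1) _ (hsub 0) (hmeas 0) ?_ ?_ ?_ ?_
      · intro β hβ
        linarith [(abs_le.1 hβ.2).2]
      · rintro β ⟨hβ, hn⟩
        by_contra! hle
        exact hn ⟨hβ, abs_le.2 ⟨by linarith [lo β hβ], by linarith⟩⟩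
      · refine hk_aux_pos x hc (x 0 + 1) 0 m0 (by linarith) _ ?_
        intro β hβ hl
        exact ⟨hβ, abs_le.2 ⟨by linarith [lo β hβ], by linarith⟩⟩
      · refine hk_aux_pos (fun β => - x β) hc.neg (-(x 0 + 1)) 1 m1 (by linarith) _ ?_
        intro β hβ hl
        refine ⟨hβ, fun hn => ?_⟩
        linarith [(abs_le.1 hn.2).2]
    have e1 : -hkT x 1 < -∫ β in Icc (0:ℝ) 1, x β := by
      have := hk_aux_avg (fun β => - x β) hc.neg (1 - x 1) _ (hsub 1) (hmeas 1) ?_ ?_ ?_ ?_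
      · rw [integral_neg, integral_neg, neg_div] at this
        exact this
      · intro β hβ
        linarith [(abs_le.1 hβ.2).1]
      · rintro β ⟨hβ, hn⟩
        by_contra! hle
        exact hn ⟨hβ, abs_le.2 ⟨by linarith, by linarith [hi β hβ]⟩⟩
      · refine hk_aux_pos (fun β => - x β) hc.neg (1 - x 1) 1 m1 (by linarith) _ ?_
        intro β hβ hl
        exact ⟨hβ, abs_le.2 ⟨by linarith, by linarith [hi β hβ]⟩⟩
      · refine hk_aux_pos x hc (x 1 - 1) 0 m0 (by linarith) _ ?_
        intro β hβ hl
        refine ⟨hβ, fun hn => ?_⟩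
        linarith [(abs_le.1 hn.2).1]
    rw [h 0 m0] at e0
    rw [h 1 m1] at e1
    linarith
  · intro hle
    refine ⟨(∫ β in Icc (0:ℝ) 1, x β) / (volume (Icc (0:ℝ) 1)).toReal, fun α hα => ?_⟩
    have : hkNbhd x α = Icc 0 1 := by
      ext β
      refine ⟨fun h => h.1, fun hβ => ⟨hβ, abs_le.2 ⟨?_, ?_⟩⟩⟩
      · linarith [lo β hβ, hi α hα]
      · linarith [lo α hα, hi β hβ]
    rw [hkT, this]
end

section
/- Let x : [0,1] → ℝ be continuous, nondecreasing, non-constant, and anti-symmetric about c = 1/2, i.e. x(c + s) + x(c − s) = 2x(c) for all s ∈ [0, 1/2]. Then the HK update Tx is also anti-symmetric about c, i.e. Tx(c + s) + Tx(c − s) = 2·Tx(c) for all s ∈ [0, 1/2], and Tx(c) = x(c). -/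
open MeasureTheory Set

theorem hk_key (x : ℝ → ℝ) (hcont : ContinuousOn x (Icc 0 1))
    (hr : ∀ β ∈ Icc (0:ℝ) 1, x (1 - β) = 2 * x (1/2) - x β)
    (α : ℝ) (hα : α ∈ Icc (0:ℝ) 1) :
    hkT x (1 - α) + hkT x α = 2 * x (1/2) := by
  have hmem : ∀ β : ℝ, 1 - β ∈ Icc (0:ℝ) 1 ↔ β ∈ Icc (0:ℝ) 1 := by
    intro β
    constructor <;> rintro ⟨h1, h2⟩ <;> constructor <;> linarith
  have hpre : hkNbhd x (1 - α) = (fun β : ℝ => 1 - β) ⁻¹' hkNbhd x α := by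
    ext β
    simp only [hkNbhd, mem_ofPred_eq, mem_preimage, hmem]
    refine and_congr_right fun hβ => ?_
    rw [hr α hα, hr β hβ, ← abs_neg (x β - (2 * x (1/2) - x α))]
    ring_nf
  have hmeas : MeasurableSet (hkNbhd x α) := by
    have h : IsClosed (Icc (0:ℝ) 1 ∩ x ⁻¹' (Icc (x α - 1) (x α + 1))) :=
      hcont.preimage_isClosed_of_isClosed isClosed_Icc isClosed_Icc
    convert h.measurableSet using 1
    ext β
    simp only [hkNbhd, mem_ofPred_eq, mem_inter_iff, mem_preimage, abs_le, mem_Icc]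
    constructor <;> rintro ⟨h1, h2, h3⟩ <;> refine ⟨h1, ?_, ?_⟩ <;> linarith
  have hsub : hkNbhd x α ⊆ Icc 0 1 := fun β h => h.1
  have hfin : volume (hkNbhd x α) ≠ ⊤ :=
    ((measure_mono hsub).trans_lt measure_Icc_lt_top).ne
  have hpos : volume (hkNbhd x α) ≠ 0 := by
    obtain ⟨δ, hδ, h⟩ := Metric.continuousOn_iff.1 hcont α hα 1 one_pos
    have hs : Icc (max 0 (α - δ/2)) (min 1 (α + δ/2)) ⊆ hkNbhd x α := by
      rintro β ⟨h1, h2⟩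
      rw [max_le_iff] at h1
      rw [le_min_iff] at h2
      have hβ : β ∈ Icc (0:ℝ) 1 := ⟨h1.1, h2.1⟩
      refine ⟨hβ, ?_⟩
      have := h β hβ (by rw [Real.dist_eq, abs_lt]; constructor <;> linarith [h1.2, h2.2])
      rw [Real.dist_eq] at this
      exact this.le
    have hlt : max 0 (α - δ/2) < min 1 (α + δ/2) := by
      obtain ⟨h1, h2⟩ := hα
      rw [max_lt_iff, lt_min_iff, lt_min_iff]
      refine ⟨⟨?_, ?_⟩, ?_, ?_⟩ <;> linarith
    have := measure_mono (μ := volume) hs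
    rw [Real.volume_Icc] at this
    exact ((ENNReal.ofReal_pos.2 (sub_pos.2 hlt)).trans_le this).ne'
  have hmp : MeasurePreserving (fun β : ℝ => 1 - β) volume volume :=
    Measure.measurePreserving_sub_left volume 1
  have hvol : volume (hkNbhd x (1 - α)) = volume (hkNbhd x α) := by
    rw [hpre, hmp.measure_preimage hmeas.nullMeasurableSet]
  have hint : ∫ β in hkNbhd x (1 - α), x β
      = 2 * x (1/2) * (volume (hkNbhd x α)).toReal - ∫ β in hkNbhd x α, x β := by
    have h1 := hmp.setIntegral_preimage_emb
      (MeasurableEquiv.subLeft (1:ℝ)).measurableEmbedding (fun β => x (1 - β)) (hkNbhd x α)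
    simp only [sub_sub_cancel] at h1
    have hi : Integrable (fun _ : ℝ => 2 * x (1/2)) (volume.restrict (hkNbhd x α)) :=
      integrableOn_const hfin
    have hi2 : Integrable x (volume.restrict (hkNbhd x α)) :=
      hcont.integrableOn_Icc.mono_set hsub
    rw [hpre, h1, setIntegral_congr_fun hmeas (fun β hβ => hr β (hsub hβ)),
      integral_sub hi hi2,
      setIntegral_const, smul_eq_mul, mul_comm]
    rfl
  have hV : (volume (hkNbhd x α)).toReal ≠ 0 := ENNReal.toReal_ne_zero.2 ⟨hpos, hfin⟩
  simp only [hkT]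
  rw [hint, hvol]
  field_simp
  ring

/-- Anti-symmetry about the centre `c = 1/2` is preserved by the HK update, and
the opinion of the central agent is fixed. -/
theorem hk_antisymmetry_preserved (x : ℝ → ℝ)
    (hcont : ContinuousOn x (Icc 0 1)) (hmono : MonotoneOn x (Icc 0 1))
    (hnonconst : ∃ a ∈ Icc (0:ℝ) 1, ∃ b ∈ Icc (0:ℝ) 1, x a ≠ x b)
    (hsym : ∀ s ∈ Icc (0:ℝ) (1/2), x (1/2 + s) + x (1/2 - s) = 2 * x (1/2)) :
    (∀ s ∈ Icc (0:ℝ) (1/2),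
      hkT x (1/2 + s) + hkT x (1/2 - s) = 2 * hkT x (1/2)) ∧
    hkT x (1/2) = x (1/2) := by
  have hr : ∀ β ∈ Icc (0:ℝ) 1, x (1 - β) = 2 * x (1/2) - x β := by
    rintro β ⟨h0, h1⟩
    rcases le_total β (1/2) with h | h
    · have := hsym (1/2 - β) ⟨by linarith, by linarith⟩
      rw [show (1/2 + (1/2 - β) : ℝ) = 1 - β by ring,
        show (1/2 - (1/2 - β) : ℝ) = β by ring] at this
      linarith
    · have := hsym (β - 1/2) ⟨by linarith, by linarith⟩
      rw [show (1/2 + (β - 1/2) : ℝ) = β by ring,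
        show (1/2 - (β - 1/2) : ℝ) = 1 - β by ring] at this
      linarith
  have hc : hkT x (1/2) = x (1/2) := by
    have := hk_key x hcont hr (1/2) ⟨by norm_num, by norm_num⟩
    rw [show (1 - 1/2 : ℝ) = 1/2 by norm_num] at this
    linarith
  refine ⟨fun s hs => ?_, hc⟩
  obtain ⟨h0, h1⟩ := hs
  have := hk_key x hcont hr (1/2 - s) ⟨by linarith, by linarith⟩
  rw [show (1 - (1/2 - s) : ℝ) = 1/2 + s by ring] at this
  rw [this, hc]
end

section
/- Let ε = 1/100 and d = 3/2, and let (e_t)_{t≥0} and (s_t)_{t≥0} be sequences of positive reals with e₀ = ε, s₀ = d/ε⁴, and satisfying e_{t+1} ≤ 2 e_t / s_t and s_{t+1} ≥ (ε/2)·(s_t / e_t) for all t ≥ 0. Then for all t ≥ 1, e_t ≤ 2ε⁵/d and s_t ≥ (d/(4ε⁴))^{t−1} · d/(2ε⁴). -/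
/-- The recursive derivative bounds from the proof of the main theorem: with
`ε = 1/100`, `d = 3/2`, `e₀ = ε`, `s₀ = d/ε⁴`, and the recursions
`e_{t+1} ≤ 2e_t/s_t`, `s_{t+1} ≥ (ε/2)(s_t/e_t)`, one gets `e_t ≤ 2ε⁵/d` and
`s_t ≥ (d/(4ε⁴))^{t−1}·(d/(2ε⁴))` for all `t ≥ 1`. -/
theorem hk_derivative_bounds_iterate (ε d : ℝ) (hε : ε = 1/100) (hd : d = 3/2)
    (e s : ℕ → ℝ) (he : ∀ t, 0 < e t) (hs : ∀ t, 0 < s t)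
    (he0 : e 0 = ε) (hs0 : s 0 = d / ε^4)
    (hrec_e : ∀ t, e (t+1) ≤ 2 * e t / s t)
    (hrec_s : ∀ t, s (t+1) ≥ (ε/2) * (s t / e t)) :
    ∀ t : ℕ, 1 ≤ t →
      e t ≤ 2 * ε^5 / d ∧ (d / (4 * ε^4))^(t-1) * (d / (2 * ε^4)) ≤ s t := by
  subst hε hd
  have key : ∀ n : ℕ, e (n+1) ≤ 1/7500000000 ∧ (37500000:ℝ)^n * 75000000 ≤ s (n+1) := by
    intro n
    induction n with
    | zero =>
      have h1 := hrec_e 0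
      have h2 := hrec_s 0
      rw [he0, hs0] at h1 h2
      norm_num at h1 h2 ⊢
      constructor <;> linarith
    | succ n ih =>
      obtain ⟨ih1, ih2⟩ := ih
      have hE := he (n+1)
      have hS := hs (n+1)
      have hp : (1:ℝ) ≤ (37500000:ℝ)^n := one_le_pow₀ (by norm_num)
      constructor
      · refine (hrec_e (n+1)).trans ?_
        rw [div_le_iff₀ hS]
        linarith
      · refine le_trans ?_ (hrec_s (n+1))
        have h3 : 7500000000 * s (n+1) ≤ s (n+1) / e (n+1) := by
          rw [le_div_iff₀ hE]
          nlinarith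
        rw [pow_succ]
        linarith
  intro t ht
  obtain ⟨n, rfl⟩ : ∃ n, t = n + 1 := ⟨t - 1, by omega⟩
  obtain ⟨h1, h2⟩ := key n
  rw [Nat.add_sub_cancel]
  have a1 : 2 * (1/100 : ℝ)^5 / (3/2) = 1/7500000000 := by norm_num
  have a2 : (3/2 : ℝ) / (4 * (1/100)^4) = 37500000 := by norm_num
  have a3 : (3/2 : ℝ) / (2 * (1/100)^4) = 75000000 := by norm_num
  rw [a1, a2, a3]
  exact ⟨h1, h2⟩
end
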